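/- arXiv:1103.2105 — 7 statements merged into one kernel-verified Lean document; each statement's English description precedes it below -/
import Mathlib

section
/- Let f ∈ [det−1] be such that every monomial occurring in f has total degree at most d (i.e., f ∈ C_{≤d}). Then the degree-d homogeneous component π_d(f) of f belongs to the differential ideal [det]. -/
open MvPolynomial

/-- Variables of the differential polynomial ring `C = K{c₁₁, c₁₂, c₂₁, c₂₂}`:
the variable `((i, j), n)` represents `c_{ij}^{(n)}`, the `n`-th derivative of `c_{ij}`. -/
abbrev DVar : Type := (Fin 2 × Fin 2) × ℕ

/-- The differential polynomial ring `C = K{c₁₁, c₁₂, c₂₁, c₂₂}`. -/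
abbrev DiffPolyC (K : Type) [CommRing K] : Type := MvPolynomial DVar K

/-- `det = c₁₁·c₂₂ − c₁₂·c₂₁`. -/
noncomputable def detC (K : Type) [CommRing K] : DiffPolyC K :=
  X ((0, 0), 0) * X ((1, 1), 0) - X ((0, 1), 0) * X ((1, 0), 0)

/-- `D : C → C` is the unique derivation extending the derivation `δ` of `K` and shifting
variables, i.e. `D(c_{ij}^{(n)}) = c_{ij}^{(n+1)}`. -/
def IsDiffStructure {K : Type} [CommRing K] (δ : K → K) (D : DiffPolyC K → DiffPolyC K) : Prop :=
  (∀ a b : K, δ (a + b) = δ a + δ b) ∧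
  (∀ a b : K, δ (a * b) = δ a * b + a * δ b) ∧
  (∀ f g : DiffPolyC K, D (f + g) = D f + D g) ∧
  (∀ f g : DiffPolyC K, D (f * g) = D f * g + f * D g) ∧
  (∀ a : K, D (C a) = C (δ a)) ∧
  (∀ v : DVar, D (X v) = X (v.1, v.2 + 1))

namespace DetProof

def lv (n : ℕ) : DVar := if n % 2 = 0 then ((0, 0), n / 2) else ((0, 1), n / 2)

def rv (n : ℕ) : DVar := if n % 2 = 0 then ((1, 1), n / 2) else ((1, 0), n / 2 + 1)

theorem lv_inj : Function.Injective lv := by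
  intro a b h
  unfold lv at h
  split_ifs at h <;> simp at h <;> omega

theorem rv_inj : Function.Injective rv := by
  intro a b h
  unfold rv at h
  split_ifs at h <;> simp at h <;> omega

theorem lv_ne_rv (a b : ℕ) : lv a ≠ rv b := by
  intro h
  unfold lv rv at h
  split_ifs at h <;> simp at h

/-- The leading exponent of the `i`-th derivative of det. -/
noncomputable def mm (i : ℕ) : DVar →₀ ℕ := Finsupp.single (lv i) 1 + Finsupp.single (rv i) 1

noncomputable def al (u : DVar →₀ ℕ) : ℕ →₀ ℕ :=
  Finsupp.zipWith min (by simp) (u.comapDomain lv lv_inj.injOn) (u.comapDomain rv rv_inj.injOn)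

theorem al_apply (u : DVar →₀ ℕ) (i : ℕ) : al u i = min (u (lv i)) (u (rv i)) := rfl

noncomputable def MM (a : ℕ →₀ ℕ) : DVar →₀ ℕ := a.mapDomain lv + a.mapDomain rv

theorem MM_add (a b : ℕ →₀ ℕ) : MM (a + b) = MM a + MM b := by
  simp only [MM, Finsupp.mapDomain_add]; abel

theorem MM_single (i : ℕ) : MM (Finsupp.single i 1) = mm i := by
  simp [MM, mm, Finsupp.mapDomain_single]

theorem MM_zero : MM 0 = 0 := by simp [MM]

theorem MM_lv (a : ℕ →₀ ℕ) (i : ℕ) : MM a (lv i) = a i := by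
  simp only [MM, Finsupp.add_apply]
  rw [Finsupp.mapDomain_apply lv_inj, Finsupp.mapDomain_of_notMem_range]
  · simp
  · rintro ⟨j, hj⟩; exact lv_ne_rv _ _ hj.symm

theorem MM_rv (a : ℕ →₀ ℕ) (i : ℕ) : MM a (rv i) = a i := by
  simp only [MM, Finsupp.add_apply]
  rw [Finsupp.mapDomain_apply rv_inj, Finsupp.mapDomain_of_notMem_range]
  · simp
  · rintro ⟨j, hj⟩; exact lv_ne_rv _ _ hj

theorem mm_lv (i j : ℕ) : mm i (lv j) = if i = j then 1 else 0 := by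
  rw [← MM_single, MM_lv, Finsupp.single_apply]

theorem mm_rv (i j : ℕ) : mm i (rv j) = if i = j then 1 else 0 := by
  rw [← MM_single, MM_rv, Finsupp.single_apply]

theorem mm_le (i : ℕ) (u : DVar →₀ ℕ) (h1 : 1 ≤ u (lv i)) (h2 : 1 ≤ u (rv i)) : mm i ≤ u := by
  intro v
  have := lv_ne_rv i i
  simp only [mm, Finsupp.add_apply, Finsupp.single_apply]
  split_ifs with h3 h4 h4
  · exact absurd (h3.trans h4.symm) this
  · subst h3; simpa using h1
  · subst h4; simpa using h2
  · simp

theorem MM_al_le (u : DVar →₀ ℕ) : MM (al u) ≤ u := by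
  intro v
  by_cases h1 : v ∈ Set.range lv
  · obtain ⟨i, rfl⟩ := h1
    rw [MM_lv, al_apply]; exact min_le_left _ _
  by_cases h2 : v ∈ Set.range rv
  · obtain ⟨i, rfl⟩ := h2
    rw [MM_rv, al_apply]; exact min_le_right _ _
  simp only [MM, Finsupp.add_apply]
  rw [Finsupp.mapDomain_of_notMem_range _ _ h1, Finsupp.mapDomain_of_notMem_range _ _ h2]
  simp

theorem al_add (u : DVar →₀ ℕ) (i : ℕ) : al (u + mm i) = al u + Finsupp.single i 1 := by
  ext j
  simp only [Finsupp.add_apply, al_apply, mm_lv, mm_rv, Finsupp.single_apply]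
  omega

def idx (v : DVar) : ℕ := v.2

def cst (v : DVar) : ℕ :=
  if v.1 = (0, 1) then 4 * v.2 ^ 2 + 8 * v.2 + 1
  else if v.1 = (1, 0) then 4 * v.2 ^ 2 + 1
  else 4 * v.2 ^ 2 + 4 * v.2

noncomputable def wt : (DVar →₀ ℕ) →+ ℕ := Finsupp.weight idx
noncomputable def cost : (DVar →₀ ℕ) →+ ℕ := Finsupp.weight cst

theorem cost_le (u : DVar →₀ ℕ) : cost u ≤ u.degree * (4 * (wt u) ^ 2 + 8 * wt u + 1) := by
  have h : ∀ v ∈ u.support, u v * cst v ≤ u v * (4 * (wt u) ^ 2 + 8 * wt u + 1) := by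
    intro v hv
    have h1 : idx v ≤ wt u := Finsupp.le_weight_of_ne_zero' idx (by simpa using hv)
    apply Nat.mul_le_mul_left
    have h2 : cst v ≤ 4 * (idx v) ^ 2 + 8 * idx v + 1 := by
      unfold cst idx
      split_ifs <;> omega
    refine h2.trans ?_
    gcongr
  rw [Finsupp.degree_apply, Finset.sum_mul]
  refine le_trans (le_of_eq ?_) (Finset.sum_le_sum h)
  simp [cost, Finsupp.weight_apply, Finsupp.sum]

section
variable {K : Type} [Field K]

def RS (u : DVar →₀ ℕ) : Set (DVar →₀ ℕ) :=
  {v | v.degree = u.degree ∧ wt v = wt u ∧ cost u < cost v}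

def LL (p : DiffPolyC K) (u : DVar →₀ ℕ) : Prop :=
  p - monomial u 1 ∈ restrictSupport K (RS u)

theorem LL_mon (u : DVar →₀ ℕ) : LL (monomial u (1 : K)) u := by
  simp [LL]

theorem LL_one : LL (1 : DiffPolyC K) 0 := by
  have := LL_mon (K := K) 0
  simpa using this

open Pointwise in
theorem mul_mem_RS {s t w : Set (DVar →₀ ℕ)} (h : ∀ a ∈ s, ∀ b ∈ t, a + b ∈ w)
    {p q : DiffPolyC K} (hp : p ∈ restrictSupport K s) (hq : q ∈ restrictSupport K t) :
    p * q ∈ restrictSupport K w := by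
  refine restrictSupport_mono (s := s + t) K ?_ ?_
  · rintro _ ⟨a, ha, b, hb, rfl⟩; exact h a ha b hb
  · rw [restrictSupport_add]; exact Submodule.mul_mem_mul hp hq

theorem LL_mul {p q : DiffPolyC K} {u v : DVar →₀ ℕ} (hp : LL p u) (hq : LL q v) :
    LL (p * q) (u + v) := by
  unfold LL at *
  have e : p * q - monomial (u + v) 1 = (p - monomial u 1) * (q - monomial v 1)
      + (p - monomial u 1) * monomial v 1 + monomial u 1 * (q - monomial v 1) := by
    have : (monomial (u + v) (1 : K)) = monomial u 1 * monomial v 1 := by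
      simp [monomial_mul]
    rw [this]; ring
  rw [e]
  have hu : (monomial u (1 : K)) ∈ restrictSupport K {u} := by simp
  have hv : (monomial v (1 : K)) ∈ restrictSupport K {v} := by simp
  refine Submodule.add_mem _ (Submodule.add_mem _ (mul_mem_RS ?_ hp hq) (mul_mem_RS ?_ hp hv))
    (mul_mem_RS ?_ hu hq)
  all_goals
    intro a ha b hb
    simp only [RS, Set.mem_ofPred_eq, Set.mem_singleton_iff] at ha hb ⊢
    try subst ha
    try subst hb
    simp only [map_add]
    omega

theorem LL_pow {p : DiffPolyC K} {u : DVar →₀ ℕ} (hp : LL p u) (n : ℕ) : LL (p ^ n) (n • u) := by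
  induction n with
  | zero => simpa using LL_one
  | succ n ih => rw [pow_succ, succ_nsmul]; exact LL_mul ih hp

noncomputable def pr (Q : ℕ → DiffPolyC K) (a : ℕ →₀ ℕ) : DiffPolyC K := a.prod fun i n => Q i ^ n

theorem pr_add (Q : ℕ → DiffPolyC K) (a b : ℕ →₀ ℕ) : pr Q (a + b) = pr Q a * pr Q b :=
  Finsupp.prod_add_index' (by simp) (by intros; rw [pow_add])

theorem pr_single (Q : ℕ → DiffPolyC K) (i : ℕ) : pr Q (Finsupp.single i 1) = Q i := by
  simp [pr]

theorem LL_pr {Q : ℕ → DiffPolyC K} (hQ : ∀ i, LL (Q i) (mm i)) (a : ℕ →₀ ℕ) :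
    LL (pr Q a) (MM a) := by
  induction a using Finsupp.induction_linear with
  | zero => simpa [pr, MM_zero] using LL_one
  | add f g hf hg => rw [pr_add, MM_add]; exact LL_mul hf hg
  | single i n =>
    have h := LL_pow (hQ i) n
    have e : MM (Finsupp.single i n) = n • mm i := by
      simp [MM, mm, Finsupp.mapDomain_single]
    simpa [pr, e] using h

noncomputable def phi0 (Q : ℕ → DiffPolyC K) (u : DVar →₀ ℕ) : DiffPolyC K :=
  monomial (u - MM (al u)) 1 * pr Q (al u)

theorem LL_phi0 {Q : ℕ → DiffPolyC K} (hQ : ∀ i, LL (Q i) (mm i)) (u : DVar →₀ ℕ) :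
    LL (phi0 Q u) u := by
  have := LL_mul (LL_mon (K := K) (u - MM (al u))) (LL_pr hQ (al u))
  rwa [tsub_add_cancel_of_le (MM_al_le u)] at this

theorem phi0_add (Q : ℕ → DiffPolyC K) (u : DVar →₀ ℕ) (i : ℕ) :
    phi0 Q (mm i + u) = Q i * phi0 Q u := by
  unfold phi0
  rw [add_comm, al_add, MM_add, MM_single, pr_add, pr_single, add_tsub_add_eq_tsub_right]
  ring

noncomputable def phi (Q : ℕ → DiffPolyC K) : DiffPolyC K →ₗ[K] DiffPolyC K :=
  (basisMonomials DVar K).constr K (phi0 Q)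

theorem phi_mon (Q : ℕ → DiffPolyC K) (u : DVar →₀ ℕ) : phi Q (monomial u 1) = phi0 Q u := by
  have := (basisMonomials DVar K).constr_basis K (phi0 Q) u
  simpa [phi] using this

theorem phi_mul (Q : ℕ → DiffPolyC K) (i : ℕ) (g : DiffPolyC K) :
    phi Q (monomial (mm i) 1 * g) = Q i * phi Q g := by
  have : (phi Q) ∘ₗ (LinearMap.mulLeft K (monomial (mm i) (1 : K)))
      = (LinearMap.mulLeft K (Q i)) ∘ₗ (phi Q) := by
    apply (basisMonomials DVar K).ext
    intro u
    simp [phi_mon, phi0_add, monomial_mul]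
  exact LinearMap.congr_fun this g

/-- how `phi - id` acts on supports -/
theorem phi_sub_mem {Q : ℕ → DiffPolyC K} (hQ : ∀ i, LL (Q i) (mm i)) {s t : Set (DVar →₀ ℕ)}
    (h : ∀ u ∈ s, RS u ⊆ t) {g : DiffPolyC K} (hg : g ∈ restrictSupport K s) :
    phi Q g - g ∈ restrictSupport K t := by
  rw [restrictSupport_eq_span] at hg
  have : Submodule.span K ((monomial · (1 : K)) '' s) ≤
      (restrictSupport K t).comap (phi Q - LinearMap.id) := by
    rw [Submodule.span_le]
    rintro _ ⟨u, hu, rfl⟩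
    simp only [Submodule.comap_coe, Set.mem_preimage, LinearMap.sub_apply, LinearMap.id_apply,
      phi_mon]
    exact restrictSupport_mono K (h u hu) (LL_phi0 hQ u)
  exact this hg

theorem phi_surj_aux {Q : ℕ → DiffPolyC K} (hQ : ∀ i, LL (Q i) (mm i)) (d w : ℕ) (k : ℕ) :
    ∀ n, d * (4 * w ^ 2 + 8 * w + 1) < n + k →
    ∀ g ∈ restrictSupport K {v : DVar →₀ ℕ | v.degree = d ∧ wt v = w ∧ n ≤ cost v},
      g ∈ LinearMap.range (phi Q) := by
  induction k with
  | zero =>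
    intro n hn g hg
    have : g = 0 := by
      rw [← support_eq_empty, Finset.eq_empty_iff_forall_notMem]
      intro v hv
      obtain ⟨h1, h2, h3⟩ := (mem_restrictSupport_iff K).1 hg hv
      have := cost_le v
      rw [h1, h2] at this
      omega
    rw [this]; exact zero_mem _
  | succ k ih =>
    intro n hn g hg
    have h := ih (n + 1) (by omega) (phi Q g - g) (phi_sub_mem hQ (by
      rintro u ⟨h1, h2, h3⟩ v ⟨h4, h5, h6⟩
      exact ⟨h4.trans h1, h5.trans h2, by omega⟩) hg)
    have e : g = phi Q g - (phi Q g - g) := by abel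
    rw [e]
    exact Submodule.sub_mem _ ⟨g, rfl⟩ h

theorem phi_surj {Q : ℕ → DiffPolyC K} (hQ : ∀ i, LL (Q i) (mm i)) :
    Function.Surjective (phi Q) := by
  rw [← LinearMap.range_eq_top, eq_top_iff, ← (basisMonomials DVar K).span_eq, Submodule.span_le]
  rintro _ ⟨u, rfl⟩
  refine phi_surj_aux hQ u.degree (wt u) (u.degree * (4 * (wt u) ^ 2 + 8 * wt u + 1) + 1) 0
    (by omega) _ ?_
  simp

theorem deg_of_phi {Q : ℕ → DiffPolyC K} (hQ : ∀ i, LL (Q i) (mm i)) (d : ℕ) (g : DiffPolyC K)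
    (h : (phi Q g).totalDegree ≤ d) : ∀ u ∈ g.support, u.degree ≤ d := by
  have key : ∀ n, g ∈ restrictSupport K {v : DVar →₀ ℕ | v.degree ≤ d ∨ n ≤ cost v} := by
    intro n
    induction n with
    | zero => simp
    | succ n ih =>
      have h1 := phi_sub_mem hQ (t := {v : DVar →₀ ℕ | v.degree ≤ d ∨ n + 1 ≤ cost v}) (by
        rintro u hu v ⟨h4, h5, h6⟩
        simp only [Set.mem_ofPred_eq] at hu ⊢
        omega) ih
      have h2 : phi Q g ∈ restrictSupport K {v : DVar →₀ ℕ | v.degree ≤ d ∨ n + 1 ≤ cost v} := by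
        rw [mem_restrictSupport_iff]
        intro v hv
        left
        exact (le_totalDegree (by simpa using hv)).trans h
      have e : g = phi Q g - (phi Q g - g) := by abel
      rw [e]
      exact Submodule.sub_mem _ h2 h1
  intro u hu
  have := (mem_restrictSupport_iff K).1 (key (cost u + 1)) hu
  simp only [Set.mem_ofPred_eq] at this
  omega

theorem phi_homog {Q : ℕ → DiffPolyC K} (hQ : ∀ i, LL (Q i) (mm i)) (u : DVar →₀ ℕ) :
    (phi0 Q u).IsHomogeneous u.degree := by
  have h := LL_phi0 hQ u
  have e : phi0 Q u = (phi0 Q u - monomial u 1) + monomial u 1 := by abel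
  rw [e]
  refine IsHomogeneous.add ?_ (isHomogeneous_monomial _ rfl)
  intro v hv
  have := (mem_restrictSupport_iff K).1 h (by simpa using hv)
  rw [← this.1]
  simp only [Finsupp.degree_eq_weight_one]
  rfl

open Classical in
theorem mono_case (d : ℕ) (g : DiffPolyC K) (hd : ∀ u ∈ g.support, u.degree ≤ d)
    (hg : g ∈ Ideal.span {p : DiffPolyC K | ∃ i : ℕ, p = monomial (mm i) 1 - if i = 0 then 1 else 0})
    (u : DVar →₀ ℕ) (hu : u ∈ g.support) (hud : u.degree = d) : ∃ i, mm i ≤ u := by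
  by_contra hcon
  push Not at hcon
  let lam : DiffPolyC K →ₗ[K] K :=
    (basisMonomials DVar K).constr K (fun v => if ∃ k : ℕ, v = u + k • mm 0 then (1 : K) else 0)
  have hlam : ∀ v, lam (monomial v 1) = if ∃ k : ℕ, v = u + k • mm 0 then (1 : K) else 0 := by
    intro v
    have := (basisMonomials DVar K).constr_basis K
      (fun v => if ∃ k : ℕ, v = u + k • mm 0 then (1 : K) else 0) v
    simpa [lam] using this
  have hu0 : ∀ (i k : ℕ) (v : DVar →₀ ℕ), i ≠ 0 → mm i + v ≠ u + k • mm 0 := by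
    intro i k v hi h
    apply hcon i
    have hl := DFunLike.congr_fun h (lv i)
    have hr := DFunLike.congr_fun h (rv i)
    simp [mm_lv, mm_rv, hi.symm] at hl hr
    apply mm_le <;> omega
  have hu1 : ∀ v : DVar →₀ ℕ,
      (∃ k : ℕ, mm 0 + v = u + k • mm 0) ↔ ∃ k : ℕ, v = u + k • mm 0 := by
    intro v
    constructor
    · rintro ⟨k, hk⟩
      cases k with
      | zero =>
        exfalso
        apply hcon 0
        rw [zero_smul, add_zero] at hk
        rw [← hk]
        exact le_self_add
      | succ k =>
        refine ⟨k, ?_⟩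
        rw [succ_nsmul, ← add_assoc, add_comm] at hk
        exact add_right_cancel hk
    · rintro ⟨k, rfl⟩
      exact ⟨k + 1, by rw [succ_nsmul]; abel⟩
  have h1 : ∀ i (r : DiffPolyC K), lam (r * (monomial (mm i) 1 - if i = 0 then 1 else 0)) = 0 := by
    intro i r
    have : lam ∘ₗ (LinearMap.mulRight K (monomial (mm i) (1 : K) - if i = 0 then 1 else 0)) = 0 := by
      apply (basisMonomials DVar K).ext
      intro v
      by_cases hi : i = 0
      · subst hi
        simp only [coe_basisMonomials, LinearMap.comp_apply, LinearMap.mulRight_apply, if_true,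
          mul_sub, mul_one, monomial_mul, map_sub, hlam, LinearMap.zero_apply]
        rw [add_comm v, hu1, sub_self]
      · simp only [coe_basisMonomials, LinearMap.comp_apply, LinearMap.mulRight_apply, if_neg hi,
          sub_zero, mul_one, monomial_mul, hlam, LinearMap.zero_apply]
        rw [if_neg]
        rintro ⟨k, hk⟩
        exact hu0 i k v hi (by rw [add_comm, hk])
    exact LinearMap.congr_fun this r
  have h0 : ∀ g ∈ Ideal.span
      {p : DiffPolyC K | ∃ i : ℕ, p = monomial (mm i) 1 - if i = 0 then 1 else 0}, lam g = 0 := by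
    intro g hg
    refine Submodule.closure_induction (p := fun g _ => lam g = 0) (by simp) ?_ ?_ hg
    · intro x y _ _ hx hy
      rw [map_add, hx, hy, add_zero]
    · rintro r _ ⟨i, rfl⟩
      exact h1 i r
  have h2 := h0 g hg
  rw [g.as_sum, map_sum, Finset.sum_eq_single u] at h2
  · have e : monomial u (coeff u g) = coeff u g • monomial u (1 : K) := by
      simp [smul_monomial]
    rw [e, map_smul, hlam, if_pos ⟨0, by simp⟩] at h2
    simp at h2
    simp [h2] at hu
  · intro v hv hne
    have e : monomial v (coeff v g) = coeff v g • monomial v (1 : K) := by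
      simp [smul_monomial]
    rw [e, map_smul, hlam, if_neg, smul_zero]
    rintro ⟨k, rfl⟩
    have h3 := hd _ hv
    have h4 : (mm 0).degree = 2 := by simp [mm]
    simp only [map_add, map_nsmul, h4, hud, smul_eq_mul] at h3
    apply hne
    have : k = 0 := by omega
    simp [this]
  · intro h; exact absurd hu h

theorem main_aux {Q : ℕ → DiffPolyC K} (hQ : ∀ i, LL (Q i) (mm i)) (d : ℕ) (f : DiffPolyC K)
    (hdeg : f.totalDegree ≤ d)
    (hf : f ∈ Ideal.span {g : DiffPolyC K | ∃ i : ℕ, g = Q i - if i = 0 then 1 else 0}) :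
    homogeneousComponent d f ∈ Ideal.span {g : DiffPolyC K | ∃ i : ℕ, g = Q i} := by
  obtain ⟨g, hg, rfl⟩ : ∃ g ∈ Ideal.span
      {p : DiffPolyC K | ∃ i : ℕ, p = monomial (mm i) 1 - if i = 0 then 1 else 0},
      phi Q g = f := by
    refine Submodule.closure_induction (p := fun f _ => ∃ g ∈ Ideal.span
      {p : DiffPolyC K | ∃ i : ℕ, p = monomial (mm i) 1 - if i = 0 then 1 else 0},
      phi Q g = f) ⟨0, zero_mem _, map_zero _⟩ ?_ ?_ hf
    · rintro _ _ _ _ ⟨x, hx, rfl⟩ ⟨y, hy, rfl⟩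
      exact ⟨x + y, add_mem hx hy, map_add _ _ _⟩
    · rintro r _ ⟨i, rfl⟩
      obtain ⟨r, rfl⟩ := phi_surj hQ r
      refine ⟨r * (monomial (mm i) 1 - if i = 0 then 1 else 0),
        Ideal.mul_mem_left _ _ (Ideal.subset_span ⟨i, rfl⟩), ?_⟩
      rw [mul_sub, map_sub, mul_comm, phi_mul, smul_eq_mul]
      split_ifs
      · rw [mul_one]; ring
      · rw [mul_zero, map_zero]; ring
  have hd := deg_of_phi hQ d g hdeg
  rw [g.as_sum, map_sum, map_sum]
  refine Ideal.sum_mem _ fun u hu => ?_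
  have e : monomial u (coeff u g) = coeff u g • monomial u (1 : K) := by
    simp [smul_monomial]
  rw [e, map_smul, map_smul, phi_mon, smul_eq_C_mul]
  refine Ideal.mul_mem_left _ _ ?_
  rw [homogeneousComponent_of_mem (phi_homog hQ u)]
  split_ifs with h
  · obtain ⟨i, hi⟩ := mono_case d g hd hg u hu h.symm
    rw [← add_tsub_cancel_of_le hi, phi0_add]
    exact Ideal.mul_mem_right _ _ (Ideal.subset_span ⟨i, rfl⟩)
  · exact zero_mem _

theorem leibniz {δ : K → K} {D : DiffPolyC K → DiffPolyC K} (hD : IsDiffStructure δ D)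
    (a b : Fin 2 × Fin 2) (n : ℕ) :
    D^[n] (X (a, 0) * X (b, 0)) =
      ∑ p ∈ Finset.HasAntidiagonal.antidiagonal n, n.choose p.1 • (X (a, p.1) * X (b, p.2) : DiffPolyC K) := by
  obtain ⟨-, -, hadd, hmul, -, hX⟩ := hD
  let D' : DiffPolyC K →+ DiffPolyC K := AddMonoidHom.mk' D hadd
  have hD' : ∀ x, D x = D' x := fun _ => rfl
  induction n with
  | zero => simp
  | succ n ih =>
    rw [Function.iterate_succ_apply', ih, hD', map_sum]
    rw [Finset.sum_antidiagonal_choose_succ_nsmul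
      (fun i j => (X (a, i) * X (b, j) : DiffPolyC K)) n, ← Finset.sum_add_distrib]
    refine Finset.sum_congr rfl fun p hp => ?_
    rw [map_nsmul, ← hD', hmul, hX, hX, nsmul_add, add_comm]
    have : n.choose p.2 = n.choose p.1 := by
      have := Finset.HasAntidiagonal.mem_antidiagonal.1 hp
      exact Nat.choose_symm_of_eq_add (by omega)
    simp [this]

theorem iter_sub {δ : K → K} {D : DiffPolyC K → DiffPolyC K} (hD : IsDiffStructure δ D)
    (f g : DiffPolyC K) (n : ℕ) : D^[n] (f - g) = D^[n] f - D^[n] g := by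
  obtain ⟨-, -, hadd, -⟩ := hD
  let D' : DiffPolyC K →+ DiffPolyC K := AddMonoidHom.mk' D hadd
  exact iterate_map_sub D' n f g

theorem iter_one {δ : K → K} {D : DiffPolyC K → DiffPolyC K} (hD : IsDiffStructure δ D)
    (n : ℕ) : D^[n] 1 = if n = 0 then 1 else 0 := by
  have h := hD.2.2.2.1 1 1
  have h1 : D 1 = 0 := by simpa using h
  have h0 : D 0 = 0 := by simpa using hD.2.2.1 0 0
  cases n with
  | zero => simp
  | succ n =>
    rw [Function.iterate_succ_apply, h1, Function.iterate_fixed h0]; simp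

theorem iter_det {δ : K → K} {D : DiffPolyC K → DiffPolyC K} (hD : IsDiffStructure δ D)
    (n : ℕ) : D^[n] (detC K) = ∑ p ∈ Finset.HasAntidiagonal.antidiagonal n, n.choose p.1 •
      (X ((0, 0), p.1) * X ((1, 1), p.2) - X ((0, 1), p.1) * X ((1, 0), p.2) : DiffPolyC K) := by
  rw [detC, iter_sub hD, leibniz hD, leibniz hD, ← Finset.sum_sub_distrib]
  simp only [nsmul_sub]

def lc (n : ℕ) : ℤ := if n % 2 = 0 then n.choose (n / 2) else - n.choose (n / 2)

theorem xx (v w : DVar) : (X v * X w : DiffPolyC K) =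
    monomial (Finsupp.single v 1 + Finsupp.single w 1) 1 := by
  simp [X, monomial_mul]

theorem xx_mem (v w v' w' : DVar) (h1 : v.2 + w.2 = v'.2 + w'.2)
    (h2 : cst v' + cst w' < cst v + cst w) :
    (X v * X w : DiffPolyC K) ∈
      restrictSupport K (RS (Finsupp.single v' 1 + Finsupp.single w' 1)) := by
  rw [xx, monomial_mem_restrictSupport]
  left
  refine ⟨by simp, ?_, ?_⟩
  · simpa [wt, Finsupp.weight_single, idx] using h1
  · simpa [cost, Finsupp.weight_single] using h2

theorem ar1 (i j k : ℕ) (hs : i + j = 2 * k) :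
    4 * k ^ 2 + 4 * k + (4 * k ^ 2 + 4 * k) < 4 * i ^ 2 + 8 * i + 1 + (4 * j ^ 2 + 1) := by
  obtain ⟨t, ht⟩ : ∃ t : ℤ, (i : ℤ) = k + t := ⟨i - k, by ring⟩
  have hj : (j : ℤ) = k - t := by omega
  have ht0 : 0 ≤ t * (t + 1) := by
    rcases le_or_gt t (-1) with h | h
    · exact mul_nonneg_of_nonpos_of_nonpos (by omega) (by omega)
    · exact mul_nonneg (by omega) (by omega)
  zify
  rw [ht, hj]
  nlinarith

theorem ar2 (i j k : ℕ) (hs : i + j = 2 * k) (h : ¬i = k) :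
    4 * k ^ 2 + 4 * k + (4 * k ^ 2 + 4 * k) < 4 * i ^ 2 + 4 * i + (4 * j ^ 2 + 4 * j) := by
  obtain ⟨t, ht⟩ : ∃ t : ℤ, (i : ℤ) = k + t := ⟨i - k, by ring⟩
  have hj : (j : ℤ) = k - t := by omega
  have ht0 : 0 < t ^ 2 := by
    have : t ≠ 0 := by omega
    positivity
  zify
  rw [ht, hj]
  nlinarith

theorem ar3 (i j k : ℕ) (hs : i + j = 2 * k + 1) :
    4 * k ^ 2 + 8 * k + 1 + (4 * (k + 1) ^ 2 + 1) < 4 * i ^ 2 + 4 * i + (4 * j ^ 2 + 4 * j) := by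
  obtain ⟨t, ht⟩ : ∃ t : ℤ, (i : ℤ) = k + t := ⟨i - k, by ring⟩
  have hj : (j : ℤ) = k + 1 - t := by omega
  have ht0 : 0 ≤ t * (t - 1) := by
    rcases le_or_gt t 0 with h | h
    · exact mul_nonneg_of_nonpos_of_nonpos (by omega) (by omega)
    · exact mul_nonneg (by omega) (by omega)
  zify
  rw [ht, hj]
  nlinarith

theorem ar4 (i j k : ℕ) (hs : i + j = 2 * k + 1) (h : ¬i = k) :
    4 * k ^ 2 + 8 * k + 1 + (4 * (k + 1) ^ 2 + 1) < 4 * i ^ 2 + 8 * i + 1 + (4 * j ^ 2 + 1) := by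
  obtain ⟨t, ht⟩ : ∃ t : ℤ, (i : ℤ) = k + t := ⟨i - k, by ring⟩
  have hj : (j : ℤ) = k + 1 - t := by omega
  have ht0 : 0 < t ^ 2 := by
    have : t ≠ 0 := by omega
    positivity
  zify
  rw [ht, hj]
  nlinarith

theorem det_lead {δ : K → K} {D : DiffPolyC K → DiffPolyC K} (hD : IsDiffStructure δ D)
    (n : ℕ) : D^[n] (detC K) - lc n • monomial (mm n) 1 ∈ restrictSupport K (RS (mm n)) := by
  rw [iter_det hD, mm, ← xx]
  obtain ⟨k, hk⟩ := Nat.even_or_odd' n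
  rcases hk with hk | hk
  · have hm : n % 2 = 0 := by omega
    have hk2 : n / 2 = k := by omega
    have e : lc n • (X (lv n) * X (rv n) : DiffPolyC K) = ∑ p ∈ Finset.HasAntidiagonal.antidiagonal n,
        if p = (k, k) then n.choose k • (X ((0, 0), k) * X ((1, 1), k) : DiffPolyC K) else 0 := by
      rw [Finset.sum_ite_eq', if_pos (by simp; omega)]
      simp [lc, lv, rv, hm, hk2]
    rw [e, ← Finset.sum_sub_distrib]
    refine Submodule.sum_mem _ fun p hp => ?_
    obtain ⟨i, j⟩ := p
    have hij : i + j = n := Finset.HasAntidiagonal.mem_antidiagonal.1 hp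
    have hbc : (X ((0, 1), i) * X ((1, 0), j) : DiffPolyC K) ∈
        restrictSupport K (RS (Finsupp.single (lv n) 1 + Finsupp.single (rv n) 1)) := by
      apply xx_mem
      · simp [lv, rv, hm, hk2]; omega
      · simp [lv, rv, hm, hk2, cst]
        exact ar1 i j k (by omega)
    by_cases h : i = k
    · have hj : j = k := by omega
      subst h; subst hj
      rw [if_pos rfl, nsmul_sub, sub_sub_cancel_left]
      exact neg_mem (Submodule.smul_of_tower_mem _ _ hbc)
    · rw [if_neg (by simp [h]), sub_zero]
      refine Submodule.smul_of_tower_mem _ _ (Submodule.sub_mem _ ?_ hbc)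
      apply xx_mem
      · simp [lv, rv, hm, hk2]; omega
      · simp [lv, rv, hm, hk2, cst]
        exact ar2 i j k (by omega) h
  · have hm : n % 2 = 1 := by omega
    have hk2 : n / 2 = k := by omega
    have e : lc n • (X (lv n) * X (rv n) : DiffPolyC K) = ∑ p ∈ Finset.HasAntidiagonal.antidiagonal n,
        if p = (k, k + 1) then
          - (n.choose k • (X ((0, 1), k) * X ((1, 0), k + 1) : DiffPolyC K)) else 0 := by
      rw [Finset.sum_ite_eq', if_pos (by simp; omega)]
      simp [lc, lv, rv, hm, hk2]
    rw [e, ← Finset.sum_sub_distrib]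
    refine Submodule.sum_mem _ fun p hp => ?_
    obtain ⟨i, j⟩ := p
    have hij : i + j = n := Finset.HasAntidiagonal.mem_antidiagonal.1 hp
    have hbc : (X ((0, 0), i) * X ((1, 1), j) : DiffPolyC K) ∈
        restrictSupport K (RS (Finsupp.single (lv n) 1 + Finsupp.single (rv n) 1)) := by
      apply xx_mem
      · simp [lv, rv, hm, hk2]; omega
      · simp [lv, rv, hm, hk2, cst]
        exact ar3 i j k (by omega)
    by_cases h : i = k
    · have hj : j = k + 1 := by omega
      subst h; subst hj
      rw [if_pos rfl, nsmul_sub, sub_neg_eq_add, sub_add_cancel]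
      exact Submodule.smul_of_tower_mem _ _ hbc
    · rw [if_neg (by simp [h]), sub_zero]
      refine Submodule.smul_of_tower_mem _ _ (Submodule.sub_mem _ hbc ?_)
      apply xx_mem
      · simp [lv, rv, hm, hk2]; omega
      · simp [lv, rv, hm, hk2, cst]
        exact ar4 i j k (by omega) h

theorem lc_ne (n : ℕ) : lc n ≠ 0 := by
  have : n.choose (n / 2) ≠ 0 := (Nat.choose_pos (Nat.div_le_self n 2)).ne'
  unfold lc
  split_ifs <;> simpa using this

end
end DetProof

/-- If `f ∈ [det−1]` and every monomial of `f` has total degree at most `d`,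
then the degree-`d` homogeneous component `π_d(f)` of `f` belongs to the differential
ideal `[det]`. -/
theorem homogeneousComponent_mem_detIdeal {K : Type} [Field K] [CharZero K]
    (δ : K → K) (D : DiffPolyC K → DiffPolyC K)
    (hD : IsDiffStructure δ D)
    (d : ℕ) (f : DiffPolyC K)
    (hdeg : f.totalDegree ≤ d)
    (hf : f ∈ Ideal.span {g : DiffPolyC K | ∃ i : ℕ, g = D^[i] (detC K - 1)}) :
    homogeneousComponent d f ∈
      Ideal.span {g : DiffPolyC K | ∃ i : ℕ, g = D^[i] (detC K)} := by
  have hlc : ∀ i, ((DetProof.lc i : ℤ) : K) ≠ 0 := fun i => by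
    exact_mod_cast DetProof.lc_ne i
  let Q : ℕ → DiffPolyC K := fun i => C ((DetProof.lc i : K)⁻¹) * D^[i] (detC K)
  have hQC : ∀ i, D^[i] (detC K) = C (DetProof.lc i : K) * Q i := fun i => by
    simp only [Q]
    rw [← mul_assoc, ← C_mul, mul_inv_cancel₀ (hlc i), C_1, one_mul]
  have hQ : ∀ i, DetProof.LL (Q i) (DetProof.mm i) := fun i => by
    have h := Submodule.smul_mem _ ((DetProof.lc i : K)⁻¹) (DetProof.det_lead hD i)
    unfold DetProof.LL
    convert h using 1
    rw [smul_sub, smul_eq_C_mul, ← Int.cast_smul_eq_zsmul K, smul_smul, inv_mul_cancel₀ (hlc i),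
      one_smul]
  have h := DetProof.main_aux hQ d f hdeg (by
    refine Ideal.span_le.2 ?_ hf
    rintro _ ⟨i, rfl⟩
    have e : D^[i] (detC K - 1) = C (DetProof.lc i : K) * (Q i - if i = 0 then 1 else 0) := by
      rw [DetProof.iter_sub hD, DetProof.iter_one hD, hQC, mul_sub]
      congr 1
      split_ifs with h0
      · subst h0; simp [DetProof.lc]
      · simp
    rw [e]
    exact Ideal.mul_mem_left _ _ (Ideal.subset_span ⟨i, rfl⟩))
  refine Ideal.span_le.2 ?_ h
  rintro _ ⟨i, rfl⟩
  exact Ideal.mul_mem_left _ _ (Ideal.subset_span ⟨i, rfl⟩)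
end

section
/- Let f ∈ C_{≤d} be such that its degree-d homogeneous component π_d(f) belongs to the differential ideal [det]. Then f ∈ C_{≤d−1} + [det−1]. -/
open MvPolynomial

lemma aux_closure {K : Type} [Field K] (δ : K → K) (D : DiffPolyC K → DiffPolyC K)
    (hD : IsDiffStructure δ D) (i : ℕ) :
    D^[i] (detC K) ∈ AddSubgroup.closure
      {g : DiffPolyC K | ∃ u v : DVar, g = X u * X v} := by
  obtain ⟨-, -, hadd, hmul, -, hX⟩ := hD
  let F : DiffPolyC K →+ DiffPolyC K := AddMonoidHom.mk' D hadd
  induction i with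
  | zero =>
    exact AddSubgroup.sub_mem _ (AddSubgroup.subset_closure ⟨_, _, rfl⟩)
      (AddSubgroup.subset_closure ⟨_, _, rfl⟩)
  | succ n ih =>
    rw [Function.iterate_succ_apply']
    generalize D^[n] (detC K) = g at ih
    have key : AddSubgroup.closure {g : DiffPolyC K | ∃ u v : DVar, g = X u * X v} ≤
        (AddSubgroup.closure {g : DiffPolyC K | ∃ u v : DVar, g = X u * X v}).comap F := by
      rw [AddSubgroup.closure_le]
      rintro _ ⟨u, v, rfl⟩
      change D (X u * X v) ∈ AddSubgroup.closure {g : DiffPolyC K | ∃ u v : DVar, g = X u * X v}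
      rw [hmul, hX, hX]
      exact AddSubgroup.add_mem _ (AddSubgroup.subset_closure ⟨_, _, rfl⟩)
        (AddSubgroup.subset_closure ⟨_, _, rfl⟩)
    exact key ih

lemma aux_hom {K : Type} [Field K] (δ : K → K) (D : DiffPolyC K → DiffPolyC K)
    (hD : IsDiffStructure δ D) (i : ℕ) : (D^[i] (detC K)).IsHomogeneous 2 := by
  have key : AddSubgroup.closure {g : DiffPolyC K | ∃ u v : DVar, g = X u * X v} ≤
      (homogeneousSubmodule DVar K 2).toAddSubgroup := by
    rw [AddSubgroup.closure_le]
    rintro _ ⟨u, v, rfl⟩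
    exact (isHomogeneous_X K u).mul (isHomogeneous_X K v)
  exact key (aux_closure δ D hD i)

lemma aux_sub {K : Type} [Field K] (δ : K → K) (D : DiffPolyC K → DiffPolyC K)
    (hD : IsDiffStructure δ D) (i : ℕ) :
    ∃ c : K, D^[i] (detC K) = D^[i] (detC K - 1) + C c := by
  obtain ⟨-, -, hadd, -, hC, -⟩ := hD
  induction i with
  | zero => exact ⟨1, by simp⟩
  | succ n ih =>
    obtain ⟨c, hc⟩ := ih
    exact ⟨δ c, by rw [Function.iterate_succ_apply', Function.iterate_succ_apply', hc, hadd, hC]⟩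

/-- If `f ∈ C_{≤d}` and its degree-`d` homogeneous component `π_d(f)` belongs
to the differential ideal `[det]`, then `f ∈ C_{≤d−1} + [det−1]`. -/
theorem mem_of_homogeneousComponent_mem_detIdeal {K : Type} [Field K] [CharZero K]
    (δ : K → K) (D : DiffPolyC K → DiffPolyC K)
    (hD : IsDiffStructure δ D)
    (d : ℕ) (f : DiffPolyC K)
    (hdeg : f.totalDegree ≤ d)
    (hf : homogeneousComponent d f ∈
      Ideal.span {g : DiffPolyC K | ∃ i : ℕ, g = D^[i] (detC K)}) :
    f ∈ restrictTotalDegree DVar K (d - 1) ⊔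
      (Ideal.span {g : DiffPolyC K | ∃ i : ℕ, g = D^[i] (detC K - 1)}).restrictScalars K := by
  set M := restrictTotalDegree DVar K (d - 1) ⊔
      (Ideal.span {g : DiffPolyC K | ∃ i : ℕ, g = D^[i] (detC K - 1)}).restrictScalars K with hM
  have h1 : f - homogeneousComponent d f ∈ M := by
    apply Submodule.mem_sup_left
    rw [mem_restrictTotalDegree]
    rw [totalDegree]
    apply Finset.sup_le
    intro e he
    rw [mem_support_iff, coeff_sub, coeff_homogeneousComponent] at he
    split_ifs at he with h
    · simp at he
    · have h2 := le_totalDegree (p := f) (s := e) (by rw [mem_support_iff]; simpa using he)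
      have h3 : e.degree = e.sum fun _ n => n := rfl
      omega
  have h2 : homogeneousComponent d f = homogeneousComponent d (homogeneousComponent d f) := by
    rw [homogeneousComponent_of_mem (homogeneousComponent_mem d f), if_pos rfl]
  have h3 : ∀ h ∈ Ideal.span {g : DiffPolyC K | ∃ i : ℕ, g = D^[i] (detC K)},
      homogeneousComponent d h ∈ M := by
    intro h hh
    refine Submodule.closure_induction (p := fun h _ => homogeneousComponent d h ∈ M)
      (by simp) (fun x y _ _ hx hy => by rw [map_add]; exact M.add_mem hx hy) ?_ hh
    rintro a _ ⟨i, rfl⟩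
    rw [smul_eq_mul]
    nth_rw 1 [← sum_homogeneousComponent a]
    rw [Finset.sum_mul, map_sum]
    refine M.sum_mem fun k _ => ?_
    have hk := (homogeneousComponent_isHomogeneous k a).mul (aux_hom δ D hD i)
    rw [homogeneousComponent_of_mem hk]
    split_ifs with hkd
    swap
    · exact M.zero_mem
    obtain ⟨c, hc⟩ := aux_sub δ D hD i
    rw [hc, mul_add, add_comm]
    refine Submodule.add_mem_sup ?_ ?_
    · rw [mem_restrictTotalDegree]
      refine (totalDegree_mul _ _).trans ?_
      rw [totalDegree_C]
      have := (homogeneousComponent_isHomogeneous k a).totalDegree_le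
      omega
    · exact Ideal.mul_mem_left _ _ (Ideal.subset_span ⟨i, rfl⟩)
  rw [← sub_add_cancel f (homogeneousComponent d f), h2]
  exact M.add_mem (by rwa [← h2]) (h3 _ hf)
end

section
/- Let h ∈ P be a term (a nonzero scalar multiple of a monomial) with wt(h) > 0, and let a ∈ K with a ≠ 0 and ∂a ≠ 0. Then the element τ_a(h) − a^{d(h)}·h of P is nonzero and has weight exactly wt(h) − 1. -/
open MvPolynomial

/-- Variables of the differential polynomial ring `P = K{x,y}`: the variable `(0, n)`
represents `x^{(n)}` and `(1, n)` represents `y^{(n)}`. -/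
abbrev PVar : Type := Fin 2 × ℕ

/-- The differential polynomial ring `P = K{x,y}`. -/
abbrev DiffPolyP (K : Type) [CommRing K] : Type := MvPolynomial PVar K

/-- `D : P → P` is the unique derivation extending the derivation `δ` of `K` and shifting
variables, i.e. `D(x^{(n)}) = x^{(n+1)}` and `D(y^{(n)}) = y^{(n+1)}`. -/
def IsDiffStructureP {K : Type} [CommRing K] (δ : K → K)
    (D : DiffPolyP K → DiffPolyP K) : Prop :=
  (∀ a b : K, δ (a + b) = δ a + δ b) ∧
  (∀ a b : K, δ (a * b) = δ a * b + a * δ b) ∧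
  (∀ f g : DiffPolyP K, D (f + g) = D f + D g) ∧
  (∀ f g : DiffPolyP K, D (f * g) = D f * g + f * D g) ∧
  (∀ a : K, D (C a) = C (δ a)) ∧
  (∀ v : PVar, D (X v) = X (v.1, v.2 + 1))

/-- The weight of a monomial (given by its exponents `m`):
`wt(∏ (x^{(p)})^{m_p} · ∏ (y^{(q)})^{n_q}) = Σ p·m_p + Σ q·n_q`. -/
def wdeg (m : PVar →₀ ℕ) : ℕ := m.sum fun v k => v.2 * k

/-- The weight of a differential polynomial: the maximum weight of a monomial occurring
in it (with nonzero coefficient); `wt 0 = 0`. -/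
noncomputable def wt {K : Type} [CommRing K] (f : DiffPolyP K) : ℕ := f.support.sup wdeg

/-- `d(h) = Σ_p m_p − Σ_q n_q` for a monomial with exponents `m`. -/
def dExp (m : PVar →₀ ℕ) : ℤ := m.sum fun v k => if v.1 = 0 then (k : ℤ) else -(k : ℤ)

/-- `τ_b : P → P`, the unique `K`-algebra homomorphism with `τ_b(x^{(p)}) = D^p(b·x)` and
`τ_b(y^{(q)}) = D^q(b⁻¹·y)` (the action of the diagonal torus element `diag(b, b⁻¹)`). -/
noncomputable def tauP {K : Type} [Field K] (D : DiffPolyP K → DiffPolyP K) (b : K) :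
    DiffPolyP K →ₐ[K] DiffPolyP K :=
  aeval fun v : PVar =>
    D^[v.2] (C (if v.1 = 0 then b else b⁻¹) * X (v.1, (0 : ℕ)))

/-- `σ_g : P → P` for `g = [[a, b], [c, e]]`: the unique `K`-algebra homomorphism with
`σ_g(x^{(p)}) = D^p(a·x + c·y)` and `σ_g(y^{(q)}) = D^q(b·x + e·y)`. -/
noncomputable def sigmaP {K : Type} [Field K] (D : DiffPolyP K → DiffPolyP K)
    (a b c e : K) : DiffPolyP K →ₐ[K] DiffPolyP K :=
  aeval fun v : PVar =>
    D^[v.2] (if v.1 = 0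
      then C a * X ((0 : Fin 2), (0 : ℕ)) + C c * X ((1 : Fin 2), (0 : ℕ))
      else C b * X ((0 : Fin 2), (0 : ℕ)) + C e * X ((1 : Fin 2), (0 : ℕ)))

/-- The Wronskian `x'y − xy'`. -/
noncomputable def wronsk (K : Type) [Field K] : DiffPolyP K :=
  X ((0 : Fin 2), (1 : ℕ)) * X ((1 : Fin 2), (0 : ℕ))
    - X ((0 : Fin 2), (0 : ℕ)) * X ((1 : Fin 2), (1 : ℕ))

/-- `P_m^0 = span_K {x^m, x^{m−1}y, …, y^m}`. -/
noncomputable def P0 (K : Type) [Field K] (m : ℕ) : Submodule K (DiffPolyP K) :=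
  Submodule.span K {f : DiffPolyP K | ∃ i : ℕ, i ≤ m ∧
    f = X ((0 : Fin 2), (0 : ℕ)) ^ i * X ((1 : Fin 2), (0 : ℕ)) ^ (m - i)}

/-- `P_d^1`: the `K`-span of all monomials of degree `d` and weight at most `1`. -/
noncomputable def P1 (K : Type) [Field K] (d : ℕ) : Submodule K (DiffPolyP K) :=
  Submodule.span K {f : DiffPolyP K | ∃ m : PVar →₀ ℕ,
    (m.sum fun _ k => k) = d ∧ wdeg m ≤ 1 ∧ f = monomial m (1 : K)}

/-- `U_d = span_K {x^i y^{d−i}, D(x^i y^{d−i}) : 0 ≤ i ≤ d}`. -/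
noncomputable def Ud (K : Type) [Field K] (D : DiffPolyP K → DiffPolyP K) (d : ℕ) :
    Submodule K (DiffPolyP K) :=
  Submodule.span K {f : DiffPolyP K | ∃ i : ℕ, i ≤ d ∧
    (f = X ((0 : Fin 2), (0 : ℕ)) ^ i * X ((1 : Fin 2), (0 : ℕ)) ^ (d - i) ∨
     f = D (X ((0 : Fin 2), (0 : ℕ)) ^ i * X ((1 : Fin 2), (0 : ℕ)) ^ (d - i)))}

/-- `W_d = P_d^0 + (x'y − xy')·P_{d−2}^0`. -/
noncomputable def Wd (K : Type) [Field K] (d : ℕ) : Submodule K (DiffPolyP K) :=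
  P0 K d ⊔ Submodule.map (LinearMap.mulLeft K (wronsk K)) (P0 K (d - 2))

lemma wdeg_add (s t : PVar →₀ ℕ) : wdeg (s + t) = wdeg s + wdeg t := by
  unfold wdeg
  exact Finsupp.sum_add_index' (by simp) (by intros; ring)

lemma wdeg_single (v : PVar) (n : ℕ) : wdeg (Finsupp.single v n) = v.2 * n := by
  unfold wdeg
  exact Finsupp.sum_single_index (by simp)

lemma dExp_add (s t : PVar →₀ ℕ) : dExp (s + t) = dExp s + dExp t := by
  unfold dExp
  refine Finsupp.sum_add_index' (by simp) ?_
  intros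
  split_ifs <;> push_cast <;> ring

/-- polynomials all of whose monomials have weight at most `n - k`. -/
def GG (K : Type) [Field K] (k n : ℕ) : Submodule K (DiffPolyP K) where
  carrier := {f | ∀ s, coeff s f ≠ 0 → wdeg s + k ≤ n}
  zero_mem' := by intro s; simp
  add_mem' := by
    intro f g hf hg s hs
    by_cases h : coeff s f = 0
    · apply hg
      simpa [h] using hs
    · exact hf s h
  smul_mem' := by
    intro c f hf s hs
    apply hf
    intro h
    apply hs
    simp [h]

lemma GG_mono {K : Type} [Field K] {k l n : ℕ} {f : DiffPolyP K} (h : f ∈ GG K k n) (hl : l ≤ k) :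
    f ∈ GG K l n := by
  intro s hs
  have := h s hs
  omega

lemma GG_mul {K : Type} [Field K] {k l n p : ℕ} {f g : DiffPolyP K} (hf : f ∈ GG K k n)
    (hg : g ∈ GG K l p) : f * g ∈ GG K (k + l) (n + p) := by
  intro s hs
  rw [coeff_mul] at hs
  obtain ⟨x, hx, hne⟩ := Finset.exists_ne_zero_of_sum_ne_zero hs
  have h1 := hf x.1 (left_ne_zero_of_mul hne)
  have h2 := hg x.2 (right_ne_zero_of_mul hne)
  rw [← Finset.HasAntidiagonal.mem_antidiagonal.mp hx, wdeg_add]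
  omega

lemma GG_C_mul {K : Type} [Field K] {k n : ℕ} {f : DiffPolyP K} (c : K) (hf : f ∈ GG K k n) :
    C c * f ∈ GG K k n := by
  rw [C_mul']
  exact (GG K k n).smul_mem c hf

lemma GG_monomial {K : Type} [Field K] {k n : ℕ} (s : PVar →₀ ℕ) (c : K) (h : wdeg s + k ≤ n) :
    monomial s c ∈ GG K k n := by
  intro t ht
  rw [coeff_monomial] at ht
  split_ifs at ht with h1
  · rwa [← h1]
  · exact absurd rfl ht

lemma GG_X {K : Type} [Field K] {k n : ℕ} (v : PVar) (h : v.2 + k ≤ n) :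
    (X v : DiffPolyP K) ∈ GG K k n := by
  apply GG_monomial
  rw [wdeg_single]
  omega

/-- sign -/
def epsP (K : Type) [Field K] (i : Fin 2) : K := if i = 0 then 1 else -1

/-- the lowering derivation -/
noncomputable def EE (K : Type) [Field K] : Derivation K (DiffPolyP K) (DiffPolyP K) :=
  mkDerivation K fun v : PVar => C ((v.2 : K) * epsP K v.1) * X (v.1, v.2 - 1)

lemma EE_X {K : Type} [Field K] (v : PVar) :
    EE K (X v) = C ((v.2 : K) * epsP K v.1) * X (v.1, v.2 - 1) := by
  simp [EE, mkDerivation_X]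

lemma iter_formula {K : Type} [Field K]
    (δ : K → K) (D : DiffPolyP K → DiffPolyP K) (hD : IsDiffStructureP δ D)
    (c : K) (i : Fin 2) (p : ℕ) :
    ∃ r ∈ AddSubmonoid.closure {f : DiffPolyP K | ∃ c q, q + 2 ≤ p ∧ f = C c * X (i, q)},
      D^[p] (C c * X (i, 0)) = C c * X (i, p) + C (p * δ c) * X (i, p - 1) + r := by
  obtain ⟨h1, h2, h3, h4, h5, h6⟩ := hD
  have hD0 : D 0 = 0 := by simpa using h3 0 0
  have hδ0 : δ 0 = 0 := by simpa using h1 0 0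
  have hδ1 : δ 1 = 0 := by simpa using h2 1 1
  have hδn : ∀ n : ℕ, δ n = 0 := by
    intro n
    induction n with
    | zero => simpa using hδ0
    | succ n ih => push_cast; rw [h1, ih, hδ1, add_zero]
  induction p with
  | zero => exact ⟨0, zero_mem _, by simp⟩
  | succ p ih =>
    obtain ⟨r, hr, he⟩ := ih
    refine ⟨C (p * δ (δ c)) * X (i, p - 1) + D r, ?_, ?_⟩
    · refine add_mem ?_ ?_
      · rcases Nat.eq_zero_or_pos p with h0 | h0
        · simp [h0]
        · exact AddSubmonoid.subset_closure ⟨_, p - 1, by omega, rfl⟩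
      · clear he
        induction hr using AddSubmonoid.closure_induction with
        | mem x hx =>
          obtain ⟨e, q, hq, rfl⟩ := hx
          rw [h4, h5, h6]
          exact add_mem (AddSubmonoid.subset_closure ⟨_, q, by omega, rfl⟩)
            (AddSubmonoid.subset_closure ⟨_, q + 1, by omega, rfl⟩)
        | zero => rw [hD0]; exact zero_mem _
        | add x y _ _ hx hy => rw [h3]; exact add_mem hx hy
    · rw [Function.iterate_succ_apply', he]
      rw [h3, h3, h4, h4, h5, h5, h6, h6, h2, hδn]
      rcases Nat.eq_zero_or_pos p with h0 | h0
      · subst h0; simp; ring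
      · have : p - 1 + 1 = p := by omega
        simp [this]; ring

/-- The main expansion property. -/
def TT {K : Type} [Field K] (D : DiffPolyP K → DiffPolyP K) (a b : K) (m : PVar →₀ ℕ) : Prop :=
  EE K (monomial m 1) ∈ GG K 1 (wdeg m) ∧
  ∃ r ∈ GG K 2 (wdeg m), tauP D a (monomial m 1) =
    C (a ^ dExp m) * (monomial m 1 + C b * EE K (monomial m 1)) + r

lemma TT_zero {K : Type} [Field K] (D : DiffPolyP K → DiffPolyP K) (a b : K) : TT D a b 0 := by
  have h : (monomial (0 : PVar →₀ ℕ) (1 : K)) = 1 := rfl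
  refine ⟨by rw [h]; simp, 0, zero_mem _, ?_⟩
  rw [h]
  simp [dExp]

lemma TT_add {K : Type} [Field K] (D : DiffPolyP K → DiffPolyP K) (a b : K) (ha : a ≠ 0)
    (s t : PVar →₀ ℕ) (hs : TT D a b s) (ht : TT D a b t) : TT D a b (s + t) := by
  obtain ⟨hs1, r, hr, hsr⟩ := hs
  obtain ⟨ht1, q, hq, htq⟩ := ht
  have hm : (monomial (s + t) (1 : K)) = monomial s 1 * monomial t 1 := by
    rw [monomial_mul, one_mul]
  have hs0 : (monomial s (1 : K)) ∈ GG K 0 (wdeg s) := GG_monomial _ _ (by omega)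
  have ht0 : (monomial t (1 : K)) ∈ GG K 0 (wdeg t) := GG_monomial _ _ (by omega)
  unfold TT
  rw [hm, wdeg_add, dExp_add, zpow_add₀ ha, map_mul (tauP D a), Derivation.leibniz, hsr, htq]
  generalize (monomial s (1 : K)) = A at *
  generalize (monomial t (1 : K)) = B at *
  generalize EE K A = A' at *
  generalize EE K B = B' at *
  generalize a ^ dExp s = x at *
  generalize a ^ dExp t = y at *
  have hA : A + C b * A' ∈ GG K 0 (wdeg s) :=
    add_mem hs0 (GG_C_mul _ (GG_mono hs1 (by omega)))
  have hB : B + C b * B' ∈ GG K 0 (wdeg t) :=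
    add_mem ht0 (GG_C_mul _ (GG_mono ht1 (by omega)))
  constructor
  · refine add_mem (by simpa using GG_mul hs0 ht1) ?_
    have := GG_mul hs1 ht0
    rw [smul_eq_mul, mul_comm]
    simpa using this
  · refine ⟨C (x * y * b * b) * (A' * B') + (C x * (A + C b * A')) * q + r * (C y * (B + C b * B'))
      + r * q, ?_, ?_⟩
    · refine add_mem (add_mem (add_mem ?_ ?_) ?_) ?_
      · exact GG_C_mul _ (GG_mul hs1 ht1)
      · simpa using GG_mul (GG_C_mul x hA) hq
      · simpa using GG_mul hr (GG_C_mul y hB)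
      · exact GG_mono (GG_mul hr hq) (by omega)
    · simp only [smul_eq_mul, map_mul]
      ring

lemma TT_X {K : Type} [Field K] (δ : K → K) (D : DiffPolyP K → DiffPolyP K)
    (hD : IsDiffStructureP δ D) (a : K) (ha : a ≠ 0) (v : PVar) :
    TT D a (δ a / a) (Finsupp.single v 1) := by
  have hX : (monomial (Finsupp.single v 1) (1 : K)) = X v := rfl
  have hc : δ (if v.1 = 0 then a else a⁻¹) =
      (if v.1 = 0 then a else a⁻¹) * (δ a / a) * epsP K v.1 := by
    obtain ⟨h1, h2, -⟩ := hD
    have hδ1 : δ 1 = 0 := by simpa using h2 1 1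
    have h := h2 a a⁻¹
    rw [mul_inv_cancel₀ ha, hδ1] at h
    unfold epsP
    split_ifs
    · field_simp
    · have : a * δ a⁻¹ = - (δ a * a⁻¹) := by linear_combination -h
      field_simp
      field_simp at this
      linear_combination this
  have hd : a ^ dExp (Finsupp.single v 1) = if v.1 = 0 then a else a⁻¹ := by
    unfold dExp
    rw [Finsupp.sum_single_index (by simp)]
    split_ifs <;> simp
  unfold TT
  rw [hX, wdeg_single, EE_X, hd, mul_one]
  constructor
  · rcases Nat.eq_zero_or_pos v.2 with h0 | h0
    · simp [h0]
    · exact GG_C_mul _ (GG_X _ (by simp; omega))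
  · obtain ⟨r, hr, he⟩ := iter_formula δ D hD (if v.1 = 0 then a else a⁻¹) v.1 v.2
    refine ⟨r, ?_, ?_⟩
    · clear he
      induction hr using AddSubmonoid.closure_induction with
      | mem x hx =>
        obtain ⟨e, q, hq, rfl⟩ := hx
        exact GG_C_mul _ (GG_X _ hq)
      | zero => exact zero_mem _
      | add x y _ _ hx hy => exact add_mem hx hy
    · rw [tauP, aeval_X, he, hc]
      simp only [map_mul, Prod.mk.eta]
      ring

lemma TT_all {K : Type} [Field K] (δ : K → K) (D : DiffPolyP K → DiffPolyP K)
    (hD : IsDiffStructureP δ D) (a : K) (ha : a ≠ 0) (m : PVar →₀ ℕ) :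
    TT D a (δ a / a) m := by
  induction m using Finsupp.induction_linear with
  | zero => exact TT_zero _ _ _
  | add f g hf hg => exact TT_add _ _ _ ha _ _ hf hg
  | single v n =>
    induction n with
    | zero => rw [Finsupp.single_zero]; exact TT_zero _ _ _
    | succ n ih =>
      rw [Finsupp.single_add]
      exact TT_add _ _ _ ha _ _ ih (TT_X δ D hD a ha v)

lemma EE_coeff {K : Type} [Field K] [CharZero K] (m : PVar →₀ ℕ) (v : PVar) (hv : m v ≠ 0)
    (h0 : v.2 ≠ 0) :
    coeff (m - Finsupp.single v 1 + Finsupp.single (v.1, v.2 - 1) 1) (EE K (monomial m 1)) ≠ 0 := by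
  rw [EE, mkDerivation_monomial, one_smul, Finsupp.sum, coeff_sum, Finset.sum_eq_single v]
  · rw [smul_eq_mul, C_mul_X_eq_monomial, monomial_mul, coeff_monomial, if_pos rfl]
    have : epsP K v.1 ≠ 0 := by unfold epsP; split_ifs <;> simp
    simp [hv, h0, this]
  · intro i hi hiv
    rw [smul_eq_mul, C_mul_X_eq_monomial, monomial_mul, coeff_monomial]
    by_cases hi0 : i.2 = 0
    · simp [hi0]
    · rw [if_neg]
      intro h
      have h := DFunLike.congr_fun h v
      have hne : (v.1, v.2 - 1) ≠ v := by
        intro h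
        have := congrArg Prod.snd h
        simp at this
        omega
      simp only [Finsupp.add_apply, Finsupp.tsub_apply, Finsupp.single_apply, if_neg hiv,
        if_neg hne, if_true] at h
      omega
  · intro h
    simp at h
    exact absurd h hv

/-- For a term `h = α·(monomial with exponents m)` of positive weight and
`a ∈ K` with `a ≠ 0`, `δa ≠ 0`, the element `τ_a(h) − a^{d(h)}·h` is nonzero and has weight
exactly `wt(h) − 1`. -/
theorem wt_tau_sub_smul {K : Type} [Field K] [CharZero K]
    (δ : K → K) (D : DiffPolyP K → DiffPolyP K)
    (hD : IsDiffStructureP δ D)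
    (m : PVar →₀ ℕ) (α : K) (hα : α ≠ 0)
    (hwt : 0 < wdeg m)
    (a : K) (ha : a ≠ 0) (ha' : δ a ≠ 0) :
    tauP D a (monomial m α) - C (a ^ dExp m) * monomial m α ≠ 0 ∧
    wt (tauP D a (monomial m α) - C (a ^ dExp m) * monomial m α) = wdeg m - 1 := by
  obtain ⟨hE, r, hr, hτ⟩ := TT_all δ D hD a ha m
  have hm : (monomial m α : DiffPolyP K) = C α * monomial m 1 := by
    rw [C_mul_monomial, mul_one]
  have hτC : tauP D a (C α) = C α := (tauP D a).commutes α
  have hc : a ^ dExp m ≠ 0 := zpow_ne_zero _ ha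
  have hb : δ a / a ≠ 0 := div_ne_zero ha' ha
  have key : tauP D a (monomial m α) - C (a ^ dExp m) * monomial m α =
      C (α * a ^ dExp m * (δ a / a)) * EE K (monomial m 1) + C α * r := by
    rw [hm, map_mul, hτC, hτ]
    simp only [map_mul]
    ring
  rw [key]
  obtain ⟨v, hv, hv0⟩ : ∃ v, m v ≠ 0 ∧ v.2 ≠ 0 := by
    by_contra! hcon
    apply hwt.ne'
    unfold wdeg
    refine Finset.sum_eq_zero ?_
    intro v hv
    simp [hcon v (by simpa using hv)]
  have hcoef := EE_coeff (K := K) m v hv hv0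
  set t := m - Finsupp.single v 1 + Finsupp.single (v.1, v.2 - 1) 1 with ht
  have hwt' : wdeg t + 1 = wdeg m := by
    have h1 : m - Finsupp.single v 1 + Finsupp.single v 1 = m := by
      apply tsub_add_cancel_of_le
      rw [Finsupp.single_le_iff]
      omega
    have h2 := congrArg wdeg h1
    rw [wdeg_add, wdeg_single] at h2
    rw [ht, wdeg_add, wdeg_single]
    simp only
    omega
  have hrt : coeff t r = 0 := by
    by_contra h
    have := hr t h
    omega
  have hne : coeff t (C (α * a ^ dExp m * (δ a / a)) * EE K (monomial m 1) + C α * r) ≠ 0 := by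
    rw [coeff_add, coeff_C_mul, coeff_C_mul, hrt, mul_zero, add_zero]
    exact mul_ne_zero (mul_ne_zero (mul_ne_zero hα hc) hb) hcoef
  have hmem : C (α * a ^ dExp m * (δ a / a)) * EE K (monomial m 1) + C α * r ∈ GG K 1 (wdeg m) :=
    add_mem (GG_C_mul _ hE) (GG_C_mul _ (GG_mono hr (by omega)))
  constructor
  · intro h
    rw [h] at hne
    simp at hne
  · unfold wt
    apply le_antisymm
    · apply Finset.sup_le
      intro s hs
      have := hmem s (mem_support_iff.mp hs)
      omega
    · have := Finset.le_sup (f := wdeg) (mem_support_iff.mpr hne)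
      omega
end

section
/- Let F be an infinite field and let f ∈ F[x, y, x₁, y₁] be a polynomial that does not belong to the ideal generated by x·y₁ − y·x₁. Then there exists β ∈ F such that the polynomial f(x, y, β·x, β·y) ∈ F[x, y], obtained by substituting x₁ ↦ β·x and y₁ ↦ β·y, is nonzero. -/
open MvPolynomial

theorem aux_relation {R : Type*} [CommRing R] (x y z w : R) (h : x * w = y * z) (a b c d : ℕ) :
    (if a + c ≤ c + d then z ^ (a + c) * y ^ (b + d - (c + d - (a + c))) * w ^ (c + d - (a + c))
      else x ^ (a + c - (c + d)) * z ^ (c + d) * y ^ (b + d)) =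
      x ^ a * y ^ b * z ^ c * w ^ d := by
  split_ifs with hc
  · obtain ⟨e, rfl⟩ : ∃ e, d = a + e := ⟨d - a, by omega⟩
    have h1 : c + (a + e) - (a + c) = e := by omega
    have h2 : b + (a + e) - e = b + a := by omega
    rw [h1, h2]
    calc _ = (y * z) ^ a * (y ^ b * z ^ c * w ^ e) := by ring
      _ = (x * w) ^ a * (y ^ b * z ^ c * w ^ e) := by rw [h]
      _ = _ := by ring
  · obtain ⟨e, rfl⟩ : ∃ e, a = d + e := ⟨a - d, by omega⟩
    have h1 : d + e + c - (c + d) = e := by omega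
    rw [h1]
    calc _ = (y * z) ^ d * (x ^ e * y ^ b * z ^ c) := by ring
      _ = (x * w) ^ d * (x ^ e * y ^ b * z ^ c) := by rw [h]
      _ = _ := by ring

theorem aux_mem {F : Type*} [Field F] (f : MvPolynomial (Fin 4) F)
    (hf : aeval (![X 0, X 1, X 2 * X 0, X 2 * X 1] : Fin 4 → MvPolynomial (Fin 3) F) f = 0) :
    f ∈ Ideal.span {(X 0 * X 3 - X 1 * X 2 : MvPolynomial (Fin 4) F)} := by
  set I := Ideal.span {(X 0 * X 3 - X 1 * X 2 : MvPolynomial (Fin 4) F)} with hI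
  let q : MvPolynomial (Fin 4) F →ₐ[F] (MvPolynomial (Fin 4) F ⧸ I) := Ideal.Quotient.mkₐ F I
  have hq : q (X 0) * q (X 3) = q (X 1) * q (X 2) := by
    rw [← map_mul, ← map_mul]
    exact Ideal.Quotient.eq.2 (Ideal.subset_span rfl)
  let ψ : MvPolynomial (Fin 3) F →ₗ[F] (MvPolynomial (Fin 4) F ⧸ I) :=
    (basisMonomials (Fin 3) F).constr F (fun m =>
      if m 0 ≤ m 2 then q (X 2) ^ (m 0) * q (X 1) ^ (m 1 - (m 2 - m 0)) * q (X 3) ^ (m 2 - m 0)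
      else q (X 0) ^ (m 0 - m 2) * q (X 2) ^ (m 2) * q (X 1) ^ (m 1))
  let φ := aeval (R := F) (![X 0, X 1, X 2 * X 0, X 2 * X 1] : Fin 4 → MvPolynomial (Fin 3) F)
  have key : ψ ∘ₗ φ.toLinearMap = q.toLinearMap := by
    apply (basisMonomials (Fin 4) F).ext
    intro m
    have e1 : φ (monomial m 1) = basisMonomials (Fin 3) F
        (Finsupp.single 0 (m 0 + m 2) + Finsupp.single 1 (m 1 + m 3)
          + Finsupp.single 2 (m 2 + m 3)) := by
      simp only [φ, coe_basisMonomials, aeval_monomial, map_one, one_mul]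
      rw [Finsupp.prod_fintype _ _ (by simp)]
      have : ∀ a b c : ℕ, monomial (Finsupp.single 0 a + Finsupp.single 1 b
          + Finsupp.single 2 c) (1 : F) = (X 0 ^ a * X 1 ^ b * X 2 ^ c : MvPolynomial (Fin 3) F) := by
        intro a b c
        simp [X_pow_eq_monomial, monomial_mul]
      rw [this]
      simp [Fin.prod_univ_four]
      ring
    have e2 : q (monomial m 1) = q (X 0) ^ m 0 * q (X 1) ^ m 1 * q (X 2) ^ m 2 * q (X 3) ^ m 3 := by
      rw [monomial_eq, Finsupp.prod_fintype _ _ (by simp)]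
      simp [Fin.prod_univ_four]
    simp only [coe_basisMonomials, LinearMap.comp_apply, AlgHom.toLinearMap_apply]
    rw [e1, e2, Module.Basis.constr_basis, ← aux_relation _ _ _ _ hq]
    simp
  have := LinearMap.congr_fun key f
  simp only [LinearMap.comp_apply, AlgHom.toLinearMap_apply] at this
  have h0 : φ f = 0 := hf
  rw [h0, map_zero] at this
  exact Ideal.Quotient.eq_zero_iff_mem.1 this.symm

/-- If `F` is an infinite field and `f ∈ F[x, y, x₁, y₁]` does not belong to
the ideal generated by `x·y₁ − y·x₁`, then there is `β ∈ F` such that the polynomial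
`f(x, y, β·x, β·y) ∈ F[x, y]` is nonzero.  (Variables: `0 ↦ x`, `1 ↦ y`, `2 ↦ x₁`,
`3 ↦ y₁`.) -/
theorem exists_beta_subst_ne_zero {F : Type*} [Field F] [Infinite F]
    (f : MvPolynomial (Fin 4) F)
    (hf : f ∉ Ideal.span {(X 0 * X 3 - X 1 * X 2 : MvPolynomial (Fin 4) F)}) :
    ∃ β : F,
      aeval (fun i : Fin 4 =>
        ![(X 0 : MvPolynomial (Fin 2) F), X 1, C β * X 0, C β * X 1] i) f ≠ 0 := by
  by_contra! hc
  apply hf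
  apply aux_mem
  apply MvPolynomial.funext
  intro v
  have h := congrArg (aeval (R := F) ![v 0, v 1]) (hc (v 2))
  rw [map_zero, ← AlgHom.comp_apply, comp_aeval] at h
  rw [map_zero, ← coe_aeval_eq_eval, RingHom.coe_coe, ← AlgHom.comp_apply, comp_aeval, ← h]
  congr 2
  funext i
  fin_cases i <;> simp
end

section
/- Let g = [[a,b],[c,d]] be a matrix with entries in K satisfying a·d − b·c = 1. Then σ_g(x'y − xy') − (x'y − xy') lies in span_K{x², xy, y²}. Consequently, for every d ≥ 2 the subspace W_d := P_d^0 + (x'y − xy')·P_{d−2}^0 of P satisfies σ_g(W_d) ⊆ W_d for all g ∈ SL₂(K). -/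
open MvPolynomial

theorem P0_gen {K : Type} [Field K] (i j : ℕ) :
    (X ((0 : Fin 2), (0 : ℕ)) ^ i * X ((1 : Fin 2), (0 : ℕ)) ^ j : DiffPolyP K) ∈ P0 K (i + j) :=
  Submodule.subset_span ⟨i, by omega, by rw [Nat.add_sub_cancel_left]⟩

theorem P0_mul {K : Type} [Field K] {m n : ℕ} {f g : DiffPolyP K}
    (hf : f ∈ P0 K m) (hg : g ∈ P0 K n) : f * g ∈ P0 K (m + n) := by
  have h : P0 K m * P0 K n ≤ P0 K (m + n) := by
    unfold P0
    rw [Submodule.span_mul_span, Submodule.span_le]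
    rintro _ ⟨_, ⟨i, hi, rfl⟩, _, ⟨j, hj, rfl⟩, rfl⟩
    refine Submodule.subset_span ⟨i + j, by omega, ?_⟩
    have : m + n - (i + j) = (m - i) + (n - j) := by omega
    rw [this, pow_add, pow_add]
    simp only
    ring
  exact h (Submodule.mul_mem_mul hf hg)

theorem P0_pow {K : Type} [Field K] {f : DiffPolyP K}
    (hf : f ∈ P0 K 1) (n : ℕ) : f ^ n ∈ P0 K n := by
  induction n with
  | zero => simpa using P0_gen (K := K) 0 0
  | succ n ih => rw [pow_succ]; exact P0_mul ih hf

theorem P0_lin {K : Type} [Field K] (a c : K) :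
    (C a * X ((0 : Fin 2), (0 : ℕ)) + C c * X ((1 : Fin 2), (0 : ℕ)) : DiffPolyP K) ∈ P0 K 1 := by
  have h1 := (P0 K 1).smul_mem a (P0_gen (K := K) 1 0)
  have h2 := (P0 K 1).smul_mem c (P0_gen (K := K) 0 1)
  rw [smul_eq_C_mul] at h1 h2
  simpa using (P0 K 1).add_mem h1 h2

theorem sigmaP_P0 {K : Type} [Field K] (D : DiffPolyP K → DiffPolyP K) (a b c e : K) (m : ℕ)
    {f : DiffPolyP K} (hf : f ∈ P0 K m) : sigmaP D a b c e f ∈ P0 K m := by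
  have h : P0 K m ≤ (P0 K m).comap (sigmaP D a b c e).toLinearMap := by
    conv_lhs => unfold P0
    rw [Submodule.span_le]
    rintro _ ⟨i, hi, rfl⟩
    have := P0_mul (P0_pow (P0_lin a c) i) (P0_pow (P0_lin b e) (m - i))
    rw [Nat.add_sub_cancel' hi] at this
    simpa [sigmaP] using this
  exact h hf

theorem sigmaP_wronsk {K : Type} [Field K]
    (δ : K → K) (D : DiffPolyP K → DiffPolyP K)
    (hD : IsDiffStructureP δ D)
    (a b c e : K) (hdet : a * e - b * c = 1) :
    sigmaP D a b c e (wronsk K) - wronsk K ∈ P0 K 2 := by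
  obtain ⟨-, -, hadd, hmul, hC, hX⟩ := hD
  have hdet' : (C a * C e - C b * C c : DiffPolyP K) = 1 := by
    rw [← C_mul, ← C_mul, ← C_sub, hdet, C_1]
  have key : sigmaP D a b c e (wronsk K) - wronsk K =
      (C (δ a) * X ((0 : Fin 2), (0 : ℕ)) + C (δ c) * X ((1 : Fin 2), (0 : ℕ))) *
      (C b * X ((0 : Fin 2), (0 : ℕ)) + C e * X ((1 : Fin 2), (0 : ℕ))) -
      (C a * X ((0 : Fin 2), (0 : ℕ)) + C c * X ((1 : Fin 2), (0 : ℕ))) *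
      (C (δ b) * X ((0 : Fin 2), (0 : ℕ)) + C (δ e) * X ((1 : Fin 2), (0 : ℕ))) := by
    simp [sigmaP, wronsk, hadd, hmul, hC, hX]
    linear_combination (X ((0 : Fin 2), (1 : ℕ)) * X ((1 : Fin 2), (0 : ℕ))
      - X ((0 : Fin 2), (0 : ℕ)) * X ((1 : Fin 2), (1 : ℕ))) * hdet'
  have h1 := P0_mul (P0_lin (δ a) (δ c)) (P0_lin b e)
  have h2 := P0_mul (P0_lin a c) (P0_lin (δ b) (δ e))
  rw [key]
  rw [one_add_one_eq_two] at h1 h2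
  exact Submodule.sub_mem _ h1 h2

/-- For `g = [[a, b], [c, e]]` with `a·e − b·c = 1`, the element
`σ_g(x'y − xy') − (x'y − xy')` lies in `span_K{x², xy, y²} = P₂⁰`.  Consequently, for every
`d ≥ 2` the subspace `W_d = P_d^0 + (x'y − xy')·P_{d−2}^0` is stable under `σ_g` for all
`g ∈ SL₂(K)`. -/
theorem sigma_wronskian_and_Wd_stable {K : Type} [Field K] [CharZero K]
    (δ : K → K) (D : DiffPolyP K → DiffPolyP K)
    (hD : IsDiffStructureP δ D)
    (a b c e : K) (hdet : a * e - b * c = 1) :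
    sigmaP D a b c e (wronsk K) - wronsk K ∈ P0 K 2 ∧
    ∀ d : ℕ, 2 ≤ d →
      ∀ a' b' c' e' : K, a' * e' - b' * c' = 1 →
        ∀ f ∈ Wd K d, sigmaP D a' b' c' e' f ∈ Wd K d := by
  refine ⟨sigmaP_wronsk δ D hD a b c e hdet, ?_⟩
  intro d hd a' b' c' e' hdet' f hf
  obtain ⟨p, hp, _, ⟨q, hq, rfl⟩, rfl⟩ := Submodule.mem_sup.1 hf
  have hw := sigmaP_wronsk δ D hD a' b' c' e' hdet'
  have hq' := sigmaP_P0 D a' b' c' e' _ hq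
  have h2 := P0_mul hw hq'
  rw [Nat.add_sub_cancel' hd] at h2
  refine Submodule.mem_sup.2 ⟨_, (P0 K d).add_mem (sigmaP_P0 D a' b' c' e' _ hp) h2, _,
    ⟨_, hq', rfl⟩, ?_⟩
  simp only [LinearMap.mulLeft_apply, map_add, map_mul]
  ring
end

section
/- For every integer d ≥ 2: U_d + W_d = P_d^1 and U_d ∩ W_d = P_d^0, where P_d^1 is the K-span of all monomials of P of degree d and weight at most 1, U_d := span_K{x^i y^{d−i}, ∂(x^i y^{d−i}) : 0 ≤ i ≤ d}, W_d := P_d^0 + (x'y − xy')·P_{d−2}^0, and P_m^0 := span_K{x^m, x^{m−1}y, …, y^m}. -/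
open MvPolynomial

namespace UdWdAux

variable {K : Type} [Field K]

/-- The monomial `x^i y^j`. -/
noncomputable def xy (K : Type) [Field K] (i j : ℕ) : DiffPolyP K :=
  X ((0 : Fin 2), (0 : ℕ)) ^ i * X ((1 : Fin 2), (0 : ℕ)) ^ j

/-- The `K`-linear shift derivation. -/
noncomputable def Del (K : Type) [Field K] : Derivation K (DiffPolyP K) (DiffPolyP K) :=
  mkDerivation K (fun v : PVar => (X (v.1, v.2 + 1) : DiffPolyP K))

lemma Del_X (v : PVar) : Del K (X v) = X (v.1, v.2 + 1) := by
  simp [Del, mkDerivation_X]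

lemma D_pow {δ : K → K} {D : DiffPolyP K → DiffPolyP K}
    (hD : IsDiffStructureP δ D) (v : PVar) (n : ℕ) : D (X v ^ n) = Del K (X v ^ n) := by
  obtain ⟨_, _, _, hm, _, hX⟩ := hD
  have h1 : D 1 = 0 := by
    have := hm 1 1
    simp at this
    exact this
  induction n with
  | zero => simp [h1]
  | succ n ih =>
    rw [pow_succ, hm, ih, hX, Derivation.leibniz, Del_X, smul_eq_mul, smul_eq_mul]
    ring

lemma D_xy {δ : K → K} {D : DiffPolyP K → DiffPolyP K}
    (hD : IsDiffStructureP δ D) (i j : ℕ) : D (xy K i j) = Del K (xy K i j) := by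
  have hm := hD.2.2.2.1
  unfold xy
  rw [hm, D_pow hD, D_pow hD, Derivation.leibniz, smul_eq_mul, smul_eq_mul]
  ring

lemma Del_xy (i j : ℕ) : Del K (xy K i j) =
    (i : K) • (X ((0 : Fin 2), (1 : ℕ)) * xy K (i - 1) j)
    + (j : K) • (X ((1 : Fin 2), (1 : ℕ)) * xy K i (j - 1)) := by
  unfold xy
  rw [Derivation.leibniz, Derivation.leibniz_pow, Derivation.leibniz_pow, Del_X, Del_X]
  simp only [smul_eq_mul, nsmul_eq_mul, MvPolynomial.smul_eq_C_mul, map_natCast, zero_add]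
  ring

lemma xy_eq (i j : ℕ) : xy K i j =
    monomial (Finsupp.single ((0 : Fin 2), (0 : ℕ)) i + Finsupp.single ((1 : Fin 2), (0 : ℕ)) j) 1 := by
  unfold xy
  rw [X_pow_eq_monomial, X_pow_eq_monomial, monomial_mul, one_mul]

lemma wdeg_add (m n : PVar →₀ ℕ) : wdeg (m + n) = wdeg m + wdeg n := by
  unfold wdeg
  exact Finsupp.sum_add_index' (by simp) (by intros; ring)

lemma wdeg_single (v : PVar) (n : ℕ) : wdeg (Finsupp.single v n) = v.2 * n := by
  unfold wdeg
  exact Finsupp.sum_single_index (by simp)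

/-- total degree -/
def tdeg (m : PVar →₀ ℕ) : ℕ := m.sum fun _ k => k

lemma tdeg_add (m n : PVar →₀ ℕ) : tdeg (m + n) = tdeg m + tdeg n := by
  unfold tdeg
  exact Finsupp.sum_add_index' (by simp) (by intros; ring)

lemma tdeg_single (v : PVar) (n : ℕ) : tdeg (Finsupp.single v n) = n := by
  unfold tdeg
  exact Finsupp.sum_single_index (by simp)

lemma mono_wt0 (m : PVar →₀ ℕ) (h : wdeg m = 0) :
    ∃ i j, i + j = tdeg m ∧ monomial m (1 : K) = xy K i j := by
  have hm : m = Finsupp.single ((0 : Fin 2), (0 : ℕ)) (m (0, 0))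
      + Finsupp.single ((1 : Fin 2), (0 : ℕ)) (m (1, 0)) := by
    ext ⟨a, n⟩
    rcases Nat.eq_zero_or_pos n with rfl | hn
    · fin_cases a <;> simp [Finsupp.single_apply]
    · have : m (a, n) = 0 := by
        by_contra hne
        have := (Finset.sum_eq_zero_iff.mp h) (a, n) (Finsupp.mem_support_iff.mpr hne)
        simp at this
        omega
      rw [this]
      simp [Finsupp.single_apply, hn.ne]
  refine ⟨m (0, 0), m (1, 0), ?_, ?_⟩
  · conv_rhs => rw [hm]
    rw [tdeg_add, tdeg_single, tdeg_single]
  · rw [xy_eq, ← hm]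

lemma xy_mem_P0 {i j d : ℕ} (h : i + j = d) : xy K i j ∈ P0 K d :=
  Submodule.subset_span ⟨i, by omega, by rw [← h, Nat.add_sub_cancel_left]; rfl⟩

lemma xy_mem_P1 {i j d : ℕ} (h : i + j = d) : xy K i j ∈ P1 K d := by
  refine Submodule.subset_span ⟨_, ?_, ?_, xy_eq i j⟩
  · change tdeg _ = d
    rw [tdeg_add, tdeg_single, tdeg_single, h]
  · simp [wdeg_add, wdeg_single]

lemma Xxy_mem_P1 {i j d : ℕ} (a : Fin 2) (h : i + j + 1 = d) :
    X (a, (1 : ℕ)) * xy K i j ∈ P1 K d := by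
  refine Submodule.subset_span
    ⟨Finsupp.single (a, (1 : ℕ)) 1 + (Finsupp.single ((0 : Fin 2), (0 : ℕ)) i
      + Finsupp.single ((1 : Fin 2), (0 : ℕ)) j), ?_, ?_, ?_⟩
  · change tdeg _ = d
    rw [tdeg_add, tdeg_add, tdeg_single, tdeg_single, tdeg_single]
    omega
  · simp [wdeg_add, wdeg_single]
  · rw [xy_eq, X, monomial_mul, one_mul]

lemma Del_mem_P1 {i j d : ℕ} (h : i + j = d) : Del K (xy K i j) ∈ P1 K d := by
  rw [Del_xy]
  refine Submodule.add_mem _ ?_ ?_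
  · rcases Nat.eq_zero_or_pos i with rfl | hi
    · simp
    · exact Submodule.smul_mem _ _ (Xxy_mem_P1 _ (by omega))
  · rcases Nat.eq_zero_or_pos j with rfl | hi
    · simp
    · exact Submodule.smul_mem _ _ (Xxy_mem_P1 _ (by omega))

lemma wronsk_xy (i j : ℕ) : wronsk K * xy K i j =
    X ((0 : Fin 2), (1 : ℕ)) * xy K i (j + 1) - X ((1 : Fin 2), (1 : ℕ)) * xy K (i + 1) j := by
  unfold wronsk xy
  ring

lemma P0_le_P1 (d : ℕ) : P0 K d ≤ P1 K d := by
  refine Submodule.span_le.mpr ?_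
  rintro f ⟨i, hi, rfl⟩
  exact xy_mem_P1 (by omega)

lemma P0_le_Ud (D : DiffPolyP K → DiffPolyP K) (d : ℕ) : P0 K d ≤ Ud K D d := by
  refine Submodule.span_mono ?_
  rintro f ⟨i, hi, rfl⟩
  exact ⟨i, hi, Or.inl rfl⟩

/-- substitution `x', y' ↦ t x, t y` -/
noncomputable def phi (K : Type) [Field K] (t : K) : DiffPolyP K →ₐ[K] DiffPolyP K :=
  aeval fun v : PVar => if v.2 = 0 then X v else C t * X (v.1, (0 : ℕ))

lemma phi_xy (t : K) (i j : ℕ) : phi K t (xy K i j) = xy K i j := by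
  simp [phi, xy]

lemma phi_X (t : K) (a : Fin 2) : phi K t (X (a, (1 : ℕ))) = C t * X (a, (0 : ℕ)) := by
  simp [phi]

lemma phi_wronsk (t : K) : phi K t (wronsk K) = 0 := by
  simp [phi, wronsk]
  ring

lemma phi_P0 (t : K) (d : ℕ) {f : DiffPolyP K} (hf : f ∈ P0 K d) : phi K t f = f := by
  have : P0 K d ≤ LinearMap.eqLocus (phi K t).toLinearMap LinearMap.id := by
    refine Submodule.span_le.mpr ?_
    rintro f ⟨i, hi, rfl⟩
    exact phi_xy t i (d - i)
  exact this hf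

lemma phi_Del (t : K) {i j d : ℕ} (h : i + j = d) :
    phi K t (Del K (xy K i j)) = (t * d) • xy K i j := by
  subst h
  rw [Del_xy, map_add, map_smul, map_smul, map_mul, map_mul, phi_X, phi_X, phi_xy, phi_xy]
  have h1 : (i : K) • (C t * X ((0 : Fin 2), (0 : ℕ)) * xy K (i - 1) j) = (t * i) • xy K i j := by
    cases i with
    | zero => simp
    | succ i =>
      simp only [xy, Nat.add_sub_cancel, MvPolynomial.smul_eq_C_mul, map_mul]
      ring
  have h2 : (j : K) • (C t * X ((1 : Fin 2), (0 : ℕ)) * xy K i (j - 1)) = (t * j) • xy K i j := by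
    cases j with
    | zero => simp
    | succ i =>
      simp only [xy, Nat.add_sub_cancel, MvPolynomial.smul_eq_C_mul, map_mul]
      ring
  rw [h1, h2, ← add_smul]
  push_cast
  rw [mul_add]

lemma phi_Wd (t : K) (d : ℕ) {f : DiffPolyP K} (hf : f ∈ Wd K d) : phi K t f = phi K 0 f := by
  obtain ⟨p, hp, q, ⟨r, hr, rfl⟩, rfl⟩ := Submodule.mem_sup.mp hf
  simp only [LinearMap.mulLeft_apply, map_add, map_mul, phi_wronsk, phi_P0 _ d hp, zero_mul]

lemma Ud_key {δ : K → K} {D : DiffPolyP K → DiffPolyP K}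
    (hD : IsDiffStructureP δ D) (d : ℕ) {f : DiffPolyP K} (hf : f ∈ Ud K D d) :
    (d : K) • f - Del K (phi K 1 f - phi K 0 f) ∈ P0 K d := by
  let L : DiffPolyP K →ₗ[K] DiffPolyP K := (d : K) • LinearMap.id -
    (Del K).toLinearMap ∘ₗ ((phi K 1).toLinearMap - (phi K 0).toLinearMap)
  have : Ud K D d ≤ (P0 K d).comap L := by
    refine Submodule.span_le.mpr ?_
    rintro f ⟨i, hi, hf | hf⟩
    · change f = xy K i (d - i) at hf
      subst hf
      change (d : K) • xy K i (d - i) - Del K (phi K 1 _ - phi K 0 _) ∈ P0 K d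
      rw [phi_xy, phi_xy, sub_self, map_zero, sub_zero]
      exact Submodule.smul_mem _ _ (xy_mem_P0 (by omega))
    · change f = D (xy K i (d - i)) at hf
      rw [D_xy hD] at hf
      subst hf
      change (d : K) • Del K (xy K i (d - i)) - Del K (phi K 1 _ - phi K 0 _) ∈ P0 K d
      rw [phi_Del (d := d) _ (by omega), phi_Del (d := d) _ (by omega)]
      simp
  exact this hf

lemma gens_mem [CharZero K] {δ : K → K} {D : DiffPolyP K → DiffPolyP K}
    (hD : IsDiffStructureP δ D) {d : ℕ} (hd : 2 ≤ d) :
    (∀ i j, i + j + 1 = d → X ((0 : Fin 2), (1 : ℕ)) * xy K i j ∈ Ud K D d ⊔ Wd K d) ∧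
    (∀ i j, i + j + 1 = d → X ((1 : Fin 2), (1 : ℕ)) * xy K i j ∈ Ud K D d ⊔ Wd K d) := by
  have hd0 : (d : K) ≠ 0 := by exact_mod_cast (by omega : d ≠ 0)
  have hDel : ∀ i j, i + j = d → Del K (xy K i j) ∈ Ud K D d ⊔ Wd K d := by
    intro i j h
    refine Submodule.mem_sup_left (Submodule.subset_span ⟨i, by omega, Or.inr ?_⟩)
    rw [← D_xy hD, ← h, Nat.add_sub_cancel_left]; rfl
  have hw : ∀ i j, i + j + 2 = d → wronsk K * xy K i j ∈ Ud K D d ⊔ Wd K d := by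
    intro i j h
    refine Submodule.mem_sup_right (Submodule.mem_sup_right ⟨_, xy_mem_P0 (i := i) (j := j) ?_, rfl⟩)
    omega
  have hB : ∀ i j, i + j + 1 = d →
      X ((1 : Fin 2), (1 : ℕ)) * xy K i j ∈ Ud K D d ⊔ Wd K d := by
    intro i j h
    rw [← Submodule.smul_mem_iff _ hd0]
    have h1 := hDel i (j + 1) (by omega)
    rw [Del_xy] at h1
    cases i with
    | zero =>
      have : d = j + 1 := by omega
      subst this
      simpa using h1
    | succ i =>
      have h2 := Submodule.smul_mem _ ((i : K) + 1) (hw i j (by omega))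
      rw [wronsk_xy] at h2
      have h3 := Submodule.sub_mem _ h1 h2
      convert h3 using 1
      subst h
      simp only [Nat.add_sub_cancel]
      push_cast
      module
  refine ⟨?_, hB⟩
  intro i j h
  cases j with
  | zero =>
    rw [← Submodule.smul_mem_iff _ hd0]
    have h1 := hDel (i + 1) 0 (by omega)
    rw [Del_xy] at h1
    have : d = i + 1 := by omega
    subst this
    simpa using h1
  | succ j =>
    have h2 := Submodule.add_mem _ (hw i j (by omega)) (hB (i + 1) j (by omega))
    rw [wronsk_xy] at h2
    simpa using h2

end UdWdAux

/-- For every `d ≥ 2`: `U_d + W_d = P_d^1` and `U_d ∩ W_d = P_d^0`. -/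
theorem Ud_sup_Wd_and_Ud_inf_Wd {K : Type} [Field K] [CharZero K]
    (δ : K → K) (D : DiffPolyP K → DiffPolyP K)
    (hD : IsDiffStructureP δ D)
    (d : ℕ) (hd : 2 ≤ d) :
    Ud K D d ⊔ Wd K d = P1 K d ∧ Ud K D d ⊓ Wd K d = P0 K d := by
  have hPU := UdWdAux.P0_le_Ud (K := K) D d
  constructor
  · apply le_antisymm
    · refine sup_le (Submodule.span_le.mpr ?_) (sup_le (UdWdAux.P0_le_P1 d) ?_)
      · rintro f ⟨i, hi, hf | hf⟩
        · subst hf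
          exact UdWdAux.xy_mem_P1 (by omega)
        · change f = D (UdWdAux.xy K i (d - i)) at hf
          rw [UdWdAux.D_xy hD] at hf
          subst hf
          exact UdWdAux.Del_mem_P1 (by omega)
      · rw [Submodule.map_le_iff_le_comap]
        refine Submodule.span_le.mpr ?_
        rintro f ⟨i, hi, rfl⟩
        change wronsk K * UdWdAux.xy K i (d - 2 - i) ∈ P1 K d
        rw [UdWdAux.wronsk_xy]
        exact Submodule.sub_mem _ (UdWdAux.Xxy_mem_P1 _ (by omega))
          (UdWdAux.Xxy_mem_P1 _ (by omega))
    · refine Submodule.span_le.mpr ?_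
      rintro f ⟨m, hm, hw, rfl⟩
      change UdWdAux.tdeg m = d at hm
      rcases Nat.eq_zero_or_pos (wdeg m) with h0 | hpos
      · obtain ⟨i, j, hij, he⟩ := UdWdAux.mono_wt0 (K := K) m h0
        rw [he]
        exact Submodule.mem_sup_left (hPU (UdWdAux.xy_mem_P0 (by omega)))
      · obtain ⟨v, hv, hne⟩ := Finset.exists_ne_zero_of_sum_ne_zero (hpos.ne' : wdeg m ≠ 0)
        have hv1 : Finsupp.single v 1 ≤ m := by
          rw [Finsupp.single_le_iff]
          exact Nat.one_le_iff_ne_zero.mpr (Finsupp.mem_support_iff.mp hv)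
        obtain ⟨n, rfl⟩ := exists_add_of_le hv1
        rw [UdWdAux.wdeg_add, UdWdAux.wdeg_single] at hw
        rw [UdWdAux.tdeg_add, UdWdAux.tdeg_single] at hm
        have hv2 : v.2 ≠ 0 := left_ne_zero_of_mul hne
        obtain ⟨i, j, hij, he⟩ := UdWdAux.mono_wt0 (K := K) n (by omega)
        have hmul : monomial (Finsupp.single v 1 + n) (1 : K) = X v * UdWdAux.xy K i j := by
          rw [← he, X, monomial_mul, one_mul]
        rw [hmul]
        obtain ⟨a, b⟩ := v
        have hb : b = 1 := by simp only at hw hv2; omega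
        subst hb
        fin_cases a
        · exact (UdWdAux.gens_mem hD hd).1 i j (by omega)
        · exact (UdWdAux.gens_mem hD hd).2 i j (by omega)
  · apply le_antisymm
    · rintro f ⟨hU, hW⟩
      have h := UdWdAux.Ud_key hD d hU
      rw [UdWdAux.phi_Wd 1 d hW, sub_self, map_zero, sub_zero] at h
      have hd0 : (d : K) ≠ 0 := by exact_mod_cast (by omega : d ≠ 0)
      exact (Submodule.smul_mem_iff _ hd0).mp h
    · exact le_inf hPU le_sup_left
end

section
/- Let d ≥ 2 and let V be a K-linear subspace of P with P_d^0 ⊆ V ⊆ P_d^1 such that σ_g(V) ⊆ V for every g ∈ SL₂(K). Then V is equal to one of the four subspaces P_d^0, U_d, W_d, P_d^1. -/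
open MvPolynomial

section aux
variable {K A : Type} [Field K] [CommRing A] [Algebra K A]

/-- Filtration by degree in the second variable. -/
def auxG (K : Type) {A : Type} [Field K] [CommRing A] [Algebra K A] (x y : A) (m k : ℕ) :
    Submodule K A :=
  Submodule.span K {f : A | ∃ i j : ℕ, i + j = m ∧ j < k ∧ f = x ^ i * y ^ j}

/-- The difference operator. -/
def auxT (σ : A →ₐ[K] A) : A →ₗ[K] A := σ.toLinearMap - LinearMap.id

lemma auxT_apply (σ : A →ₐ[K] A) (f : A) : auxT σ f = σ f - f := rfl

lemma auxG_mem (x y : A) {i j m k : ℕ} (h : i + j = m) (hj : j < k) :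
    x ^ i * y ^ j ∈ auxG K x y m k :=
  Submodule.subset_span ⟨i, j, h, hj, rfl⟩

lemma auxG_zero (x y : A) (m : ℕ) : auxG K x y m 0 = ⊥ := by
  unfold auxG
  rw [Submodule.span_eq_bot]
  rintro f ⟨i, j, _, h, _⟩
  omega

lemma auxG_mono (x y : A) (m : ℕ) {k l : ℕ} (h : k ≤ l) : auxG K x y m k ≤ auxG K x y m l := by
  apply Submodule.span_mono
  rintro f ⟨i, j, h1, h2, h3⟩
  exact ⟨i, j, h1, by omega, h3⟩

lemma auxT_lead (σ : A →ₐ[K] A) (x y : A) (hx : σ x = x) (hy : σ y = x + y) (i j : ℕ) :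
    auxT σ (x ^ i * y ^ (j + 1)) - ((j + 1 : ℕ) : K) • (x ^ (i + 1) * y ^ j) ∈
      auxG K x y (i + j + 1) j := by
  have key : auxT σ (x ^ i * y ^ (j + 1)) - ((j + 1 : ℕ) : K) • (x ^ (i + 1) * y ^ j) =
      ∑ k ∈ Finset.range j,
        (((j + 1).choose (k + 2) : ℕ) : K) • (x ^ (i + k + 2) * y ^ (j - 1 - k)) := by
    rw [auxT_apply, map_mul, map_pow, map_pow, hx, hy, add_pow, Finset.sum_range_succ',
      Finset.sum_range_succ']
    have : ∀ k ∈ Finset.range j,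
        (((j + 1).choose (k + 2) : ℕ) : K) • (x ^ (i + k + 2) * y ^ (j - 1 - k)) =
        x ^ i * (x ^ (k + 1 + 1) * y ^ (j + 1 - (k + 1 + 1)) * ((j + 1).choose (k + 1 + 1) : A)) := by
      intro k hk
      have : j + 1 - (k + 1 + 1) = j - 1 - k := by omega
      rw [this, Algebra.smul_def, map_natCast]
      ring
    rw [Finset.sum_congr rfl this, ← Finset.mul_sum, Algebra.smul_def, map_natCast]
    simp
    ring
  rw [key]
  refine Submodule.sum_mem _ fun k hk => Submodule.smul_mem _ _ (auxG_mem _ _ ?_ ?_)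
  · have := Finset.mem_range.1 hk; omega
  · have := Finset.mem_range.1 hk; omega

lemma auxT_G (σ : A →ₐ[K] A) (x y : A) (hx : σ x = x) (hy : σ y = x + y) (m k : ℕ) (f : A)
    (hf : f ∈ auxG K x y m k) : auxT σ f ∈ auxG K x y m (k - 1) := by
  unfold auxG at hf
  induction hf using Submodule.span_induction with
  | mem f hf =>
    obtain ⟨i, j, h, hj, rfl⟩ := hf
    rcases j with _ | j
    · simp [auxT_apply, hx]
    · have h1 := auxT_lead σ x y hx hy i j
      have h2 : ((j + 1 : ℕ) : K) • (x ^ (i + 1) * y ^ j) ∈ auxG K x y m (k - 1) :=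
        Submodule.smul_mem _ _ (auxG_mem _ _ (by omega) (by omega))
      have h3 : auxG K x y (i + j + 1) j ≤ auxG K x y m (k - 1) := by
        rw [show i + j + 1 = m by omega]
        exact auxG_mono _ _ _ (by omega)
      have := Submodule.add_mem _ (h3 h1) h2
      simpa using this
  | zero => simp
  | add f g _ _ h1 h2 => rw [map_add]; exact Submodule.add_mem _ h1 h2
  | smul a f _ h => rw [map_smul]; exact Submodule.smul_mem _ _ h

lemma auxT_iter_G (σ : A →ₐ[K] A) (x y : A) (hx : σ x = x) (hy : σ y = x + y) (m k n : ℕ) (f : A)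
    (hf : f ∈ auxG K x y m k) : (auxT σ ^ n) f ∈ auxG K x y m (k - n) := by
  induction n with
  | zero => simpa using hf
  | succ n ih =>
    rw [pow_succ', Module.End.mul_apply, show k - (n + 1) = k - n - 1 by omega]
    exact auxT_G σ x y hx hy _ _ _ ih

lemma auxT_kill (σ : A →ₐ[K] A) (x y : A) (hx : σ x = x) (hy : σ y = x + y) (m k n : ℕ)
    (h : k ≤ n) (f : A) (hf : f ∈ auxG K x y m k) : (auxT σ ^ n) f = 0 := by
  have := auxT_iter_G σ x y hx hy m k n f hf
  rw [show k - n = 0 by omega, auxG_zero] at this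
  simpa using this

lemma auxT_iter_lead [CharZero K] (σ : A →ₐ[K] A) (x y : A) (hx : σ x = x) (hy : σ y = x + y)
    (n i j : ℕ) : ∃ c : K, c ≠ 0 ∧
      (auxT σ ^ n) (x ^ i * y ^ (j + n)) - c • (x ^ (i + n) * y ^ j) ∈
        auxG K x y (i + j + n) j := by
  induction n generalizing i with
  | zero => exact ⟨1, one_ne_zero, by simp⟩
  | succ n ih =>
    obtain ⟨c, hc, h⟩ := ih (i + 1)
    have h1 := auxT_lead σ x y hx hy i (j + n)
    have h2 := auxT_iter_G σ x y hx hy _ _ n _ h1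
    refine ⟨((j + n + 1 : ℕ) : K) * c, mul_ne_zero (Nat.cast_ne_zero.2 (by omega)) hc, ?_⟩
    rw [show j + n - n = j by omega, show i + (j + n) + 1 = i + j + (n + 1) by omega] at h2
    rw [show i + 1 + j + n = i + j + (n + 1) by omega] at h
    have := Submodule.add_mem _ h2 (Submodule.smul_mem _ ((j + n + 1 : ℕ) : K) h)
    rw [map_sub, map_smul, smul_sub, smul_smul] at this
    rw [pow_succ, Module.End.mul_apply, show j + (n + 1) = j + n + 1 by omega,
      show i + (n + 1) = i + 1 + n by omega]
    simpa using this

lemma auxT_iter_stable (σ : A →ₐ[K] A) (V : Submodule K A) (hV : ∀ f ∈ V, σ f ∈ V) (n : ℕ) (f : A)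
    (hf : f ∈ V) : (auxT σ ^ n) f ∈ V := by
  induction n with
  | zero => simpa using hf
  | succ n ih =>
    rw [pow_succ', Module.End.mul_apply, auxT_apply]
    exact Submodule.sub_mem _ (hV _ ih) ih

/-- The full iterate sends `x^i y^j` to a nonzero multiple of `x^(i+j)`. -/
lemma auxT_top [CharZero K] (σ : A →ₐ[K] A) (x y : A) (hx : σ x = x) (hy : σ y = x + y)
    (i j : ℕ) : ∃ c : K, c ≠ 0 ∧ (auxT σ ^ j) (x ^ i * y ^ j) = c • x ^ (i + j) := by
  obtain ⟨c, hc, h⟩ := auxT_iter_lead σ x y hx hy j i 0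
  refine ⟨c, hc, ?_⟩
  rw [auxG_zero, Submodule.mem_bot, sub_eq_zero] at h
  simpa using h

lemma aux_pow_mem [CharZero K] (σ : A →ₐ[K] A) (x y : A) (hx : σ x = x) (hy : σ y = x + y)
    (V : Submodule K A) (hV : ∀ f ∈ V, σ f ∈ V) (m k : ℕ) (f : A)
    (hf : f ∈ auxG K x y m k) (hfV : f ∈ V) (h0 : f ≠ 0) : x ^ m ∈ V := by
  induction k with
  | zero => rw [auxG_zero] at hf; exact absurd hf h0
  | succ k ih =>
    have hdec : ∃ i, ∃ c : K, ∃ g ∈ auxG K x y m k, (c = 0 ∨ i + k = m) ∧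
        f = c • (x ^ i * y ^ k) + g := by
      by_cases hkm : k ≤ m
      · have hle : auxG K x y m (k + 1) ≤
            Submodule.span K {x ^ (m - k) * y ^ k} ⊔ auxG K x y m k := by
          conv_lhs => unfold auxG
          rw [Submodule.span_le]
          rintro _ ⟨i, j, h, hj, rfl⟩
          rcases Nat.lt_succ_iff_lt_or_eq.1 hj with h' | h'
          · exact Submodule.mem_sup_right (auxG_mem _ _ h h')
          · subst h'
            rw [show m - j = i by omega]
            exact Submodule.mem_sup_left (Submodule.mem_span_singleton_self _)
        obtain ⟨a, ha, g, hg, rfl⟩ := Submodule.mem_sup.1 (hle hf)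
        obtain ⟨c, rfl⟩ := Submodule.mem_span_singleton.1 ha
        exact ⟨m - k, c, g, hg, Or.inr (by omega), rfl⟩
      · have hle : auxG K x y m (k + 1) ≤ auxG K x y m k := by
          apply Submodule.span_mono
          rintro f ⟨i, j, h1, h2, h3⟩
          exact ⟨i, j, h1, by omega, h3⟩
        exact ⟨0, 0, f, hle hf, Or.inl rfl, by simp⟩
    obtain ⟨i, c, g, hg, hc, rfl⟩ := hdec
    by_cases hc0 : c = 0
    · subst hc0
      apply ih
      simpa using hg
    · have hik := hc.resolve_left hc0
      have h1 := auxT_iter_stable σ V hV k _ hfV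
      obtain ⟨c', hc', h2⟩ := auxT_top σ x y hx hy i k
      rw [map_add, map_smul, h2, auxT_kill σ x y hx hy m k k le_rfl g hg, add_zero, smul_smul,
        hik] at h1
      exact (Submodule.smul_mem_iff _ (mul_ne_zero hc0 hc')).1 h1

lemma aux_all_mem [CharZero K] (σ : A →ₐ[K] A) (x y : A) (hx : σ x = x) (hy : σ y = x + y)
    (V : Submodule K A) (hV : ∀ f ∈ V, σ f ∈ V) (m k : ℕ)
    (hm : y ^ m ∈ V) : auxG K x y m k ≤ V := by
  induction k with
  | zero => rw [auxG_zero]; exact bot_le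
  | succ k ih =>
    conv_lhs => unfold auxG
    rw [Submodule.span_le]
    rintro _ ⟨i, j, h, hj, rfl⟩
    rcases Nat.lt_succ_iff_lt_or_eq.1 hj with h' | h'
    · exact ih (auxG_mem _ _ h h')
    · subst h'
      obtain ⟨c, hc, h1⟩ := auxT_iter_lead σ x y hx hy i 0 j
      rw [show 0 + j + i = m by omega, pow_zero, one_mul, zero_add,
        show j + i = m by omega] at h1
      have h2 := Submodule.sub_mem _ (auxT_iter_stable σ V hV i _ hm) (ih h1)
      rw [sub_sub_cancel] at h2
      exact (Submodule.smul_mem_iff _ hc).1 h2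

lemma auxG_swap (x y : A) (m : ℕ) : auxG K x y m (m + 1) = auxG K y x m (m + 1) := by
  unfold auxG
  congr 1
  ext f
  constructor <;> rintro ⟨i, j, h, hj, rfl⟩ <;> exact ⟨j, i, by omega, by omega, mul_comm _ _⟩

/-- Irreducibility of `Sym^m`. -/
lemma aux_irred [CharZero K] (σ τ : A →ₐ[K] A) (x y : A) (hx : σ x = x) (hy : σ y = x + y)
    (tx : τ x = x + y) (ty : τ y = y)
    (V : Submodule K A) (hV : ∀ f ∈ V, σ f ∈ V) (hV' : ∀ f ∈ V, τ f ∈ V) (m : ℕ)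
    (f : A) (hf : f ∈ auxG K x y m (m + 1)) (hfV : f ∈ V) (h0 : f ≠ 0) :
    auxG K x y m (m + 1) ≤ V := by
  have h1 := aux_pow_mem σ x y hx hy V hV m _ f hf hfV h0
  rw [auxG_swap]
  exact aux_all_mem τ y x ty (by rw [tx, add_comm]) V hV' m _ h1

lemma aux_stable (σ : A →ₐ[K] A) (x y : A) (hx : σ x = x) (hy : σ y = x + y) (m k : ℕ) (f : A)
    (hf : f ∈ auxG K x y m k) : σ f ∈ auxG K x y m k := by
  have h := auxT_G σ x y hx hy m k f hf
  have := Submodule.add_mem _ (auxG_mono _ _ _ (Nat.sub_le k 1) h) hf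
  rw [auxT_apply] at this
  simpa using this

lemma auxT_comm (σ : A →ₐ[K] A) (L : A →ₗ[K] A) (h : ∀ f, σ (L f) = L (σ f)) (n : ℕ) (f : A) :
    (auxT σ ^ n) (L f) = L ((auxT σ ^ n) f) := by
  induction n with
  | zero => simp
  | succ n ih =>
    rw [pow_succ', Module.End.mul_apply, Module.End.mul_apply, ih, auxT_apply, auxT_apply, h,
      map_sub]

end aux

section main
variable {K : Type} [Field K]

lemma P0_eq (m : ℕ) : P0 K m =
    auxG K (X ((0 : Fin 2), (0 : ℕ)) : DiffPolyP K) (X ((1 : Fin 2), (0 : ℕ))) m (m + 1) := by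
  unfold P0 auxG
  congr 1
  ext f
  constructor
  · rintro ⟨i, h, rfl⟩
    exact ⟨i, m - i, by omega, by omega, rfl⟩
  · rintro ⟨i, j, h, _, rfl⟩
    exact ⟨i, by omega, by rw [show m - i = j by omega]⟩

/-- The `K`-linear version of the derivation. -/
noncomputable def D0 (K : Type) [Field K] : Derivation K (DiffPolyP K) (DiffPolyP K) :=
  mkDerivation K fun v : PVar => X (v.1, v.2 + 1)

lemma D0_X (v : PVar) : D0 K (X v) = X (v.1, v.2 + 1) := by
  simp [D0]

lemma delta_zero {δ : K → K} {D : DiffPolyP K → DiffPolyP K} (hD : IsDiffStructureP δ D) :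
    δ 0 = 0 := by
  have := hD.1 0 0
  simpa using this

lemma delta_one {δ : K → K} {D : DiffPolyP K → DiffPolyP K} (hD : IsDiffStructureP δ D) :
    δ 1 = 0 := by
  have := hD.2.1 1 1
  simpa using this

lemma D_pow {δ : K → K} {D : DiffPolyP K → DiffPolyP K} (hD : IsDiffStructureP δ D) (v : PVar)
    (n : ℕ) : D (X v ^ n) = D0 K (X v ^ n) := by
  induction n with
  | zero =>
    have := hD.2.2.2.2.1 1
    rw [delta_one hD] at this
    simpa using this
  | succ n ih =>
    rw [pow_succ, hD.2.2.2.1, ih, hD.2.2.2.2.2, Derivation.leibniz, D0_X]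
    simp only [smul_eq_mul]
    ring

lemma D_eq {δ : K → K} {D : DiffPolyP K → DiffPolyP K} (hD : IsDiffStructureP δ D) (v w : PVar)
    (i j : ℕ) : D (X v ^ i * X w ^ j) = D0 K (X v ^ i * X w ^ j) := by
  rw [hD.2.2.2.1, D_pow hD, D_pow hD, Derivation.leibniz]
  simp only [smul_eq_mul]
  ring

lemma D_iter_X {δ : K → K} {D : DiffPolyP K → DiffPolyP K} (hD : IsDiffStructureP δ D) (u : Fin 2)
    (n : ℕ) : D^[n] (X (u, 0)) = X (u, n) := by
  induction n with
  | zero => rfl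
  | succ n ih => rw [Function.iterate_succ_apply', ih, hD.2.2.2.2.2]

lemma D_iter_add {δ : K → K} {D : DiffPolyP K → DiffPolyP K} (hD : IsDiffStructureP δ D)
    (n : ℕ) (f g : DiffPolyP K) : D^[n] (f + g) = D^[n] f + D^[n] g := by
  induction n with
  | zero => rfl
  | succ n ih => simp only [Function.iterate_succ_apply', ih, hD.2.2.1]

lemma sig_x {δ : K → K} {D : DiffPolyP K → DiffPolyP K} (hD : IsDiffStructureP δ D) (n : ℕ) :
    sigmaP D 1 1 0 1 (X (0, n)) = X (0, n) := by
  simp [sigmaP, D_iter_X hD]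

lemma sig_y {δ : K → K} {D : DiffPolyP K → DiffPolyP K} (hD : IsDiffStructureP δ D) (n : ℕ) :
    sigmaP D 1 1 0 1 (X (1, n)) = X (0, n) + X (1, n) := by
  simp [sigmaP, D_iter_X hD, D_iter_add hD]

lemma tau_x {δ : K → K} {D : DiffPolyP K → DiffPolyP K} (hD : IsDiffStructureP δ D) (n : ℕ) :
    sigmaP D 1 0 1 1 (X (0, n)) = X (0, n) + X (1, n) := by
  simp [sigmaP, D_iter_X hD, D_iter_add hD]

lemma tau_y {δ : K → K} {D : DiffPolyP K → DiffPolyP K} (hD : IsDiffStructureP δ D) (n : ℕ) :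
    sigmaP D 1 0 1 1 (X (1, n)) = X (1, n) := by
  simp [sigmaP, D_iter_X hD]

lemma comm_D0 (σ : DiffPolyP K →ₐ[K] DiffPolyP K)
    (h : ∀ v : PVar, σ (X (v.1, v.2 + 1)) = D0 K (σ (X v))) (f : DiffPolyP K) :
    σ (D0 K f) = D0 K (σ f) := by
  induction f using MvPolynomial.induction_on with
  | C a =>
    rw [← MvPolynomial.algebraMap_eq, Derivation.map_algebraMap, AlgHom.commutes,
      Derivation.map_algebraMap, map_zero]
  | add p q hp hq => simp only [map_add, hp, hq]
  | mul_X p v hp =>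
    rw [Derivation.leibniz, D0_X, map_mul, Derivation.leibniz]
    simp only [smul_eq_mul, map_add, map_mul, hp, h]

lemma sig_D0 {δ : K → K} {D : DiffPolyP K → DiffPolyP K} (hD : IsDiffStructureP δ D)
    (f : DiffPolyP K) : sigmaP D 1 1 0 1 (D0 K f) = D0 K (sigmaP D 1 1 0 1 f) := by
  refine comm_D0 _ ?_ f
  rintro ⟨u, n⟩
  fin_cases u
  · simp [sig_x hD, D0_X]
  · simp [sig_y hD, D0_X]

lemma tau_D0 {δ : K → K} {D : DiffPolyP K → DiffPolyP K} (hD : IsDiffStructureP δ D)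
    (f : DiffPolyP K) : sigmaP D 1 0 1 1 (D0 K f) = D0 K (sigmaP D 1 0 1 1 f) := by
  refine comm_D0 _ ?_ f
  rintro ⟨u, n⟩
  fin_cases u
  · simp [tau_x hD, D0_X]
  · simp [tau_y hD, D0_X]

lemma sig_w {δ : K → K} {D : DiffPolyP K → DiffPolyP K} (hD : IsDiffStructureP δ D) :
    sigmaP D 1 1 0 1 (wronsk K) = wronsk K := by
  simp only [wronsk, map_sub, map_mul, sig_x hD, sig_y hD]
  ring

lemma tau_w {δ : K → K} {D : DiffPolyP K → DiffPolyP K} (hD : IsDiffStructureP δ D) :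
    sigmaP D 1 0 1 1 (wronsk K) = wronsk K := by
  simp only [wronsk, map_sub, map_mul, tau_x hD, tau_y hD]
  ring

/-- Classification of monomials. -/
lemma mono_class (d : ℕ) (m : PVar →₀ ℕ) (hm : (m.sum fun _ k => k) = d) (hw : wdeg m ≤ 1) :
    (∃ i j, i + j = d ∧ (monomial m (1 : K)) = X ((0 : Fin 2), 0) ^ i * X ((1 : Fin 2), 0) ^ j) ∨
    (∃ u : Fin 2, ∃ i j, i + j + 1 = d ∧
      (monomial m (1 : K)) = X (u, 1) * (X ((0 : Fin 2), 0) ^ i * X ((1 : Fin 2), 0) ^ j)) := by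
  classical
  have base : ∀ (e : ℕ) (m : PVar →₀ ℕ), (m.sum fun _ k => k) = e → wdeg m = 0 →
      ∃ i j, i + j = e ∧
        (monomial m (1 : K)) = X ((0 : Fin 2), 0) ^ i * X ((1 : Fin 2), 0) ^ j := by
    intro e m hm hw
    have h0 : ∀ v : PVar, v.2 ≠ 0 → m v = 0 := by
      intro v hv
      by_contra hne
      have h := (Finset.sum_eq_zero_iff.1 hw) v (Finsupp.mem_support_iff.2 hne)
      rcases Nat.mul_eq_zero.1 h with h | h
      · exact hv h
      · exact hne h
    have hm' : m = Finsupp.single ((0 : Fin 2), 0) (m (0, 0)) +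
        Finsupp.single ((1 : Fin 2), 0) (m (1, 0)) := by
      ext ⟨u, n⟩
      rcases n with _ | n
      · fin_cases u <;> simp
      · rw [h0 (u, n + 1) (by simp)]
        simp
    refine ⟨m (0, 0), m (1, 0), ?_, ?_⟩
    · rw [← hm]
      conv_rhs => rw [hm']
      rw [Finsupp.sum_add_index' (by simp) (by simp)]
      simp
    · conv_lhs => rw [hm']
      rw [X_pow_eq_monomial, X_pow_eq_monomial, monomial_mul, one_mul]
  rcases Nat.le_one_iff_eq_zero_or_eq_one.1 hw with h | h
  · exact Or.inl (base d m hm h)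
  · right
    have : ∃ v : PVar, v.2 ≠ 0 ∧ m v ≠ 0 := by
      by_contra hcon
      push Not at hcon
      have : wdeg m = 0 := by
        apply Finset.sum_eq_zero
        intro v _
        by_cases hv : v.2 = 0
        · simp [hv]
        · simp [hcon v hv]
      omega
    obtain ⟨v, hv, hmv⟩ := this
    obtain ⟨m', rfl⟩ : ∃ m', m = Finsupp.single v 1 + m' := by
      refine ⟨m - Finsupp.single v 1, ?_⟩
      rw [add_tsub_cancel_of_le]
      rw [Finsupp.single_le_iff]
      omega
    have hwadd : wdeg (Finsupp.single v 1 + m') = v.2 + wdeg m' := by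
      unfold wdeg
      rw [Finsupp.sum_add_index' (by simp) (by intros; ring)]
      simp
    have hdadd : ((Finsupp.single v 1 + m').sum fun _ k => k) = 1 + m'.sum fun _ k => k := by
      rw [Finsupp.sum_add_index' (by simp) (by simp)]
      simp
    rw [hwadd] at h
    rw [hdadd] at hm
    obtain ⟨i, j, hij, hmon⟩ := base _ m' rfl (by omega)
    refine ⟨v.1, i, j, by omega, ?_⟩
    rw [← hmon, show (v.1, 1) = v from Prod.ext rfl (by simp; omega), X, monomial_mul, one_mul]

lemma P1_le [CharZero K] (d : ℕ) (hd : 2 ≤ d) : P1 K d ≤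
    P0 K d ⊔ (Submodule.map (D0 K).toLinearMap (P0 K d) ⊔
      Submodule.map (LinearMap.mulLeft K (wronsk K)) (P0 K (d - 2))) := by
  have hdK : (d : K) ≠ 0 := Nat.cast_ne_zero.2 (by omega)
  have memD : ∀ i j, i + j = d → D0 K (X ((0 : Fin 2), 0) ^ i * X ((1 : Fin 2), 0) ^ j) ∈
      Submodule.map (D0 K).toLinearMap (P0 K d) := fun i j h =>
    ⟨_, by rw [P0_eq]; exact auxG_mem _ _ h (by omega), rfl⟩
  have memW : ∀ i j, i + j = d - 2 →
      wronsk K * (X ((0 : Fin 2), 0) ^ i * X ((1 : Fin 2), 0) ^ j) ∈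
      Submodule.map (LinearMap.mulLeft K (wronsk K)) (P0 K (d - 2)) := fun i j h =>
    ⟨_, by rw [P0_eq]; exact auxG_mem _ _ h (by omega), rfl⟩
  unfold P1
  rw [Submodule.span_le]
  rintro _ ⟨m, hm, hw, rfl⟩
  rcases mono_class (K := K) d m hm hw with ⟨i, j, h, he⟩ | ⟨u, i, j, h, he⟩
  · rw [he]
    apply Submodule.mem_sup_left
    rw [P0_eq]
    exact auxG_mem _ _ h (by omega)
  · apply Submodule.mem_sup_right
    subst h
    rw [he, ← Submodule.smul_mem_iff _ hdK]
    fin_cases u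
    · rcases j with _ | j
      · convert Submodule.mem_sup_left (memD (i + 1) 0 (by omega)) using 1
        rw [Derivation.leibniz, Derivation.leibniz_pow, Derivation.leibniz_pow, D0_X, D0_X]
        simp [smul_eq_C_mul]
        left; ring
      · convert Submodule.add_mem _ (Submodule.mem_sup_left (memD (i + 1) (j + 1) (by omega)))
          (Submodule.smul_mem _ ((j + 1 : ℕ) : K) (Submodule.mem_sup_right (memW i j (by omega)))) using 1
        rw [Derivation.leibniz, Derivation.leibniz_pow, Derivation.leibniz_pow, D0_X, D0_X]
        simp [smul_eq_C_mul, wronsk]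
        ring
    · rcases i with _ | i
      · convert Submodule.mem_sup_left (memD 0 (j + 1) (by omega)) using 1
        rw [Derivation.leibniz, Derivation.leibniz_pow, Derivation.leibniz_pow, D0_X, D0_X]
        simp [smul_eq_C_mul]
        left; ring
      · convert Submodule.sub_mem _ (Submodule.mem_sup_left (memD (i + 1) (j + 1) (by omega)))
          (Submodule.smul_mem _ ((i + 1 : ℕ) : K) (Submodule.mem_sup_right (memW i j (by omega)))) using 1
        rw [Derivation.leibniz, Derivation.leibniz_pow, Derivation.leibniz_pow, D0_X, D0_X]
        simp [smul_eq_C_mul, wronsk]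
        ring

end main

/-- If `d ≥ 2` and `V` is a `K`-subspace of `P` with `P_d^0 ⊆ V ⊆ P_d^1` that
is stable under `σ_g` for every `g ∈ SL₂(K)`, then `V` is one of `P_d^0`, `U_d`, `W_d`,
`P_d^1`. -/
theorem submodule_between_P0_P1_classification {K : Type} [Field K] [CharZero K]
    (δ : K → K) (D : DiffPolyP K → DiffPolyP K)
    (hD : IsDiffStructureP δ D)
    (d : ℕ) (hd : 2 ≤ d)
    (V : Submodule K (DiffPolyP K))
    (hV₀ : P0 K d ≤ V) (hV₁ : V ≤ P1 K d)
    (hVstable : ∀ a b c e : K, a * e - b * c = 1 →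
      ∀ f ∈ V, sigmaP D a b c e f ∈ V) :
    V = P0 K d ∨ V = Ud K D d ∨ V = Wd K d ∨ V = P1 K d := by

  have sV : ∀ f ∈ V, sigmaP D 1 1 0 1 f ∈ V := hVstable 1 1 0 1 (by ring)
  have tV : ∀ f ∈ V, sigmaP D 1 0 1 1 f ∈ V := hVstable 1 0 1 1 (by ring)
  have sx := sig_x hD 0
  have sy := sig_y hD 0
  have tx := tau_x hD 0
  have ty := tau_y hD 0
  have sP : ∀ m, ∀ f ∈ P0 K m, sigmaP D 1 1 0 1 f ∈ P0 K m := by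
    intro m f hf
    rw [P0_eq] at hf ⊢
    exact aux_stable _ _ _ sx sy _ _ f hf
  have tP : ∀ m, ∀ f ∈ P0 K m, sigmaP D 1 0 1 1 f ∈ P0 K m := by
    intro m f hf
    rw [P0_eq, auxG_swap] at hf ⊢
    exact aux_stable _ _ _ ty (by rw [tx, add_comm]) _ _ f hf
  have irr : ∀ (m : ℕ) (V' : Submodule K (DiffPolyP K)), (∀ f ∈ V', sigmaP D 1 1 0 1 f ∈ V') →
      (∀ f ∈ V', sigmaP D 1 0 1 1 f ∈ V') → ∀ f ∈ P0 K m, f ∈ V' → f ≠ 0 → P0 K m ≤ V' := by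
    intro m V' h1 h2 f hf hfV h0
    rw [P0_eq] at hf ⊢
    exact aux_irred _ _ _ _ sx sy tx ty V' h1 h2 m f hf hfV h0
  have hw : ∀ r ∈ P0 K (d - 2), wronsk K * r ∈ V → r ≠ 0 →
      Submodule.map (LinearMap.mulLeft K (wronsk K)) (P0 K (d - 2)) ≤ V := by
    intro r hr hrV h0
    rw [Submodule.map_le_iff_le_comap]
    refine irr (d - 2) _ ?_ ?_ r hr hrV h0
    · intro f hf
      have := sV _ hf
      simpa [sig_w hD] using this
    · intro f hf
      have := tV _ hf
      simpa [tau_w hD] using this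
  have hq : ∀ q ∈ P0 K d, ∀ r ∈ P0 K (d - 2), D0 K q + wronsk K * r ∈ V → q ≠ 0 →
      Submodule.map (D0 K).toLinearMap (P0 K d) ≤ V := by
    intro q hq r hr hv h0
    have h1 : P0 K d ≤ Submodule.comap (D0 K).toLinearMap
        (V ⊔ Submodule.map (LinearMap.mulLeft K (wronsk K)) (P0 K (d - 2))) := by
      refine irr d _ ?_ ?_ q hq ?_ h0
      · intro f hf
        obtain ⟨v, hv, _, ⟨r, hr, rfl⟩, hh⟩ := Submodule.mem_sup.1 hf
        refine Submodule.mem_sup.2 ⟨_, sV v hv, _, ⟨_, sP _ r hr, rfl⟩, ?_⟩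
        have := congrArg (sigmaP D 1 1 0 1) hh
        simpa [sig_w hD, sig_D0 hD] using this
      · intro f hf
        obtain ⟨v, hv, _, ⟨r, hr, rfl⟩, hh⟩ := Submodule.mem_sup.1 hf
        refine Submodule.mem_sup.2 ⟨_, tV v hv, _, ⟨_, tP _ r hr, rfl⟩, ?_⟩
        have := congrArg (sigmaP D 1 0 1 1) hh
        simpa [tau_w hD, tau_D0 hD] using this
      · refine Submodule.mem_sup.2 ⟨_, hv, _, ⟨-r, Submodule.neg_mem _ hr, rfl⟩, ?_⟩
        simp
    have h2 := h1 (show X ((1 : Fin 2), (0 : ℕ)) ^ d ∈ P0 K d by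
      have := auxG_mem (K := K) (X ((0 : Fin 2), (0 : ℕ)) : DiffPolyP K) (X ((1 : Fin 2), (0 : ℕ)))
        (zero_add d) (Nat.lt_succ_self d)
      rw [P0_eq]
      simpa using this)
    obtain ⟨v, hv, _, ⟨r, hr, rfl⟩, hh⟩ := Submodule.mem_sup.1 h2
    obtain ⟨c, hc, htop⟩ := auxT_top (sigmaP D 1 1 0 1) _ _ sx sy 0 d
    have h3 := congrArg (auxT (sigmaP D 1 1 0 1) ^ d) hh
    rw [P0_eq] at hr
    rw [map_add, auxT_comm _ (LinearMap.mulLeft K (wronsk K)) (by simp [sig_w hD]),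
      auxT_kill _ _ _ sx sy _ _ d (by omega) r hr, map_zero, add_zero,
      auxT_comm _ (D0 K).toLinearMap (by simp [sig_D0 hD])] at h3
    rw [pow_zero, one_mul, zero_add] at htop
    rw [htop, map_smul] at h3
    have h4 := auxT_iter_stable _ V sV d v hv
    rw [h3, Submodule.smul_mem_iff _ hc] at h4
    rw [Submodule.map_le_iff_le_comap]
    refine irr d _ ?_ ?_ (X ((0 : Fin 2), (0 : ℕ)) ^ d) ?_ h4 (pow_ne_zero _ (X_ne_zero _))
    · intro f hf
      have := sV _ hf
      simpa [sig_D0 hD] using this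
    · intro f hf
      have := tV _ hf
      simpa [tau_D0 hD] using this
    · have := auxG_mem (K := K) (X ((0 : Fin 2), (0 : ℕ)) : DiffPolyP K) (X ((1 : Fin 2), (0 : ℕ)))
        (add_zero d) (Nat.succ_pos d)
      rw [P0_eq]
      simpa using this
  have dec : ∀ v ∈ V, ∃ p ∈ P0 K d, ∃ q ∈ P0 K d, ∃ r ∈ P0 K (d - 2),
      v = p + (D0 K q + wronsk K * r) ∧ D0 K q + wronsk K * r ∈ V := by
    intro v hv
    obtain ⟨p, hp, _, hs, rfl⟩ := Submodule.mem_sup.1 (P1_le d hd (hV₁ hv))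
    obtain ⟨_, ⟨q, hq, rfl⟩, _, ⟨r, hr, rfl⟩, rfl⟩ := Submodule.mem_sup.1 hs
    exact ⟨p, hp, q, hq, r, hr, rfl, (Submodule.add_mem_iff_right _ (hV₀ hp)).1 hv⟩
  have hU : Ud K D d = P0 K d ⊔ Submodule.map (D0 K).toLinearMap (P0 K d) := by
    apply le_antisymm
    · unfold Ud
      rw [Submodule.span_le]
      rintro f ⟨i, hi, rfl | rfl⟩
      · exact Submodule.mem_sup_left (Submodule.subset_span ⟨i, hi, rfl⟩)
      · rw [D_eq hD]
        exact Submodule.mem_sup_right ⟨_, Submodule.subset_span ⟨i, hi, rfl⟩, rfl⟩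
    · refine sup_le ?_ ?_
      · apply Submodule.span_mono
        rintro f ⟨i, hi, rfl⟩
        exact ⟨i, hi, Or.inl rfl⟩
      · unfold P0
        rw [Submodule.map_span, Submodule.span_le]
        rintro _ ⟨_, ⟨i, hi, rfl⟩, rfl⟩
        exact Submodule.subset_span ⟨i, hi, Or.inr (D_eq hD _ _ _ _).symm⟩
  by_cases hA : Submodule.map (D0 K).toLinearMap (P0 K d) ≤ V
  · by_cases hB : Submodule.map (LinearMap.mulLeft K (wronsk K)) (P0 K (d - 2)) ≤ V
    · right; right; right
      exact le_antisymm hV₁ ((P1_le d hd).trans (sup_le hV₀ (sup_le hA hB)))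
    · right; left
      rw [hU]
      apply le_antisymm _ (sup_le hV₀ hA)
      intro v hv
      obtain ⟨p, hp, q, hq', r, hr, rfl, h⟩ := dec v hv
      have hqV : D0 K q ∈ V := hA ⟨q, hq', rfl⟩
      have hr0 : r = 0 := by
        by_contra h0
        exact hB (hw r hr ((Submodule.add_mem_iff_right _ hqV).1 h) h0)
      subst hr0
      refine Submodule.add_mem_sup hp ⟨q, hq', ?_⟩
      simp
  · have hq0 : ∀ q ∈ P0 K d, ∀ r ∈ P0 K (d - 2), D0 K q + wronsk K * r ∈ V → q = 0 := by
      intro q h1 r h2 h3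
      by_contra h0
      exact hA (hq q h1 r h2 h3 h0)
    by_cases hB : Submodule.map (LinearMap.mulLeft K (wronsk K)) (P0 K (d - 2)) ≤ V
    · right; right; left
      apply le_antisymm _ (sup_le hV₀ hB)
      intro v hv
      obtain ⟨p, hp, q, hq', r, hr, rfl, h⟩ := dec v hv
      have := hq0 q hq' r hr h
      subst this
      refine Submodule.add_mem_sup hp ⟨r, hr, ?_⟩
      simp
    · left
      apply le_antisymm _ hV₀
      intro v hv
      obtain ⟨p, hp, q, hq', r, hr, rfl, h⟩ := dec v hv
      have := hq0 q hq' r hr h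
      subst this
      have hr0 : r = 0 := by
        by_contra h0
        exact hB (hw r hr (by simpa using h) h0)
      subst hr0
      simpa using hp
end
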